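/- arXiv:1511.00478 — 3 statements merged into one kernel-verified Lean document; each statement's English description precedes it below -/
import Mathlib

section
/- Let m and n be positive integers and let a be an odd positive integer. Then t(a,a,2a,8m;n) = (2/3)·N(a,a,2a,8m; 8n+8m+4a) − 2·N(a,a,2a,8m; 2n+2m+a). -/
/-!
Multiplying by `8` and completing squares, `t(a,a,2a,8m;n)` counts the solutions with all
coordinates odd of `a X² + a Y² + 2a Z² + 8m W² = 8n + 8m + 4a`. Call the full solution set of
this equation `A`, and let `B` be the solution set of
`a x² + a y² + 2a z² + 2m w² = 2n + 2m + a`.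

Since `a` is odd, a point of `A` has `X² + Y² + 2Z² ≡ 4 (mod 8)`, so `X, Y, Z` are all even or all
odd (`parity_big`). The even points are the image of `B` under `(x,y,z,w) ↦ (2x,2y,2z,w)`. For the
odd ones put `u = (X+Y)/2`, `v = (X-Y)/2`; then `X² + Y² + 2Z² = 2(u² + v² + Z²)`, exactly one of
`u, v` is even, and calling it `2z` and writing the two remaining odd numbers as `x + y`, `x - y`
gives a point of `B`. Hence the odd points form two disjoint copies of `B`, embedded by maps
preserving `w`, and `|A| = 3|B|` (`bigSol_eq`).

Restricting to odd `w`, `t = 2|B₁|` where `B = B₀ ⊔ B₁` is the splitting by the parity of `w`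
(`image_tri`). Finally `N(a,a,2a,8m;2n+2m+a) = |B₀|` by doubling `w`, so
`t = 2|B| - 2|B₀| = (2/3)|A| - 2|B₀|`.
-/

open scoped BigOperators

/-- `Nquad a b c d n` is the number of quadruples `(x,y,z,w) ∈ ℤ⁴` with
`n = a*x^2 + b*y^2 + c*z^2 + d*w^2`. -/
noncomputable def Nquad (a b c d : ℕ) (n : ℕ) : ℕ :=
  Nat.card {p : ℤ × ℤ × ℤ × ℤ //
    (n : ℤ) = a * p.1 ^ 2 + b * p.2.1 ^ 2 + c * p.2.2.1 ^ 2 + d * p.2.2.2 ^ 2}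

/-- `tquad a b c d n` is the number of quadruples `(x,y,z,w) ∈ ℤ⁴` with
`n = a*x(x-1)/2 + b*y(y-1)/2 + c*z(z-1)/2 + d*w(w-1)/2`. -/
noncomputable def tquad (a b c d : ℕ) (n : ℕ) : ℕ :=
  Nat.card {p : ℤ × ℤ × ℤ × ℤ //
    (n : ℤ) = a * (p.1 * (p.1 - 1) / 2) + b * (p.2.1 * (p.2.1 - 1) / 2)
      + c * (p.2.2.1 * (p.2.2.1 - 1) / 2) + d * (p.2.2.2 * (p.2.2.2 - 1) / 2)}

/-- The integer solutions of `a x² + a y² + 2a z² + 2m w² = 2n + 2m + a`. -/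
def smallSol (a m n : ℕ) : Set (ℤ × ℤ × ℤ × ℤ) :=
  {p | (a : ℤ) * p.1 ^ 2 + a * p.2.1 ^ 2 + 2 * a * p.2.2.1 ^ 2 + 2 * m * p.2.2.2 ^ 2
    = 2 * n + 2 * m + a}

/-- The integer solutions of `a x² + a y² + 2a z² + 8m w² = 8n + 8m + 4a`. -/
def bigSol (a m n : ℕ) : Set (ℤ × ℤ × ℤ × ℤ) :=
  {p | (a : ℤ) * p.1 ^ 2 + a * p.2.1 ^ 2 + 2 * a * p.2.2.1 ^ 2 + 8 * m * p.2.2.2 ^ 2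
    = 8 * n + 8 * m + 4 * a}

/-- The quadruples whose last coordinate is odd. -/
def oddW : Set (ℤ × ℤ × ℤ × ℤ) := {p | Odd p.2.2.2}

/-- The embedding of `smallSol` onto the points of `bigSol` with `X, Y, Z` even. -/
def dbl (p : ℤ × ℤ × ℤ × ℤ) : ℤ × ℤ × ℤ × ℤ := (2 * p.1, 2 * p.2.1, 2 * p.2.2.1, p.2.2.2)

/-- The embedding of `smallSol` onto the points of `bigSol` with `X, Y, Z` odd and
`(X + Y) / 2 = 2z` even. -/
def rotE (p : ℤ × ℤ × ℤ × ℤ) : ℤ × ℤ × ℤ × ℤ :=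
  (2 * p.2.2.1 + (p.1 + p.2.1), 2 * p.2.2.1 - (p.1 + p.2.1), p.1 - p.2.1, p.2.2.2)

/-- The embedding of `smallSol` onto the points of `bigSol` with `X, Y, Z` odd and
`(X - Y) / 2 = 2z` even. -/
def rotO (p : ℤ × ℤ × ℤ × ℤ) : ℤ × ℤ × ℤ × ℤ :=
  ((p.1 + p.2.1) + 2 * p.2.2.1, (p.1 + p.2.1) - 2 * p.2.2.1, p.1 - p.2.1, p.2.2.2)

theorem dbl_injective : Function.Injective dbl := by
  rintro ⟨x, y, z, w⟩ ⟨x', y', z', w'⟩ h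
  simp only [dbl, Prod.mk.injEq] at h ⊢
  omega

theorem rotE_injective : Function.Injective rotE := by
  rintro ⟨x, y, z, w⟩ ⟨x', y', z', w'⟩ h
  simp only [rotE, Prod.mk.injEq] at h ⊢
  omega

theorem rotO_injective : Function.Injective rotO := by
  rintro ⟨x, y, z, w⟩ ⟨x', y', z', w'⟩ h
  simp only [rotO, Prod.mk.injEq] at h ⊢
  omega

theorem smallSol_finite (a m n : ℕ) (ha : Odd a) (hm : 0 < m) : (smallSol a m n).Finite := by
  set M : ℤ := 2 * n + 2 * m + a with hM
  refine (Set.finite_Icc ((-M, -M, -M, -M) : ℤ × ℤ × ℤ × ℤ) (M, M, M, M)).subset ?_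
  rintro ⟨x, y, z, w⟩ h
  simp only [smallSol, Set.mem_ofPred_eq, ← hM] at h
  have ha' : (1 : ℤ) ≤ a := by exact_mod_cast ha.pos
  have hm' : (1 : ℤ) ≤ m := by exact_mod_cast hm
  have bound : ∀ c t : ℤ, 1 ≤ c → c * t ^ 2 ≤ M → -M ≤ t ∧ t ≤ M := by
    intro c t hc ht
    have h1 : t ^ 2 ≤ M := by nlinarith [sq_nonneg t]
    have h2 := Int.le_self_sq t
    have h3 := Int.le_self_sq (-t)
    rw [neg_sq] at h3
    constructor <;> linarith
  have hx : 0 ≤ (a : ℤ) * x ^ 2 := by positivity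
  have hy : 0 ≤ (a : ℤ) * y ^ 2 := by positivity
  have hz : 0 ≤ 2 * (a : ℤ) * z ^ 2 := by positivity
  have hw : 0 ≤ 2 * (m : ℤ) * w ^ 2 := by positivity
  have bx := bound a x ha' (by linarith)
  have bye := bound a y ha' (by linarith)
  have bz := bound (2 * a) z (by linarith) (by linarith)
  have bw := bound (2 * m) w (by linarith) (by linarith)
  exact ⟨⟨bx.1, bye.1, bz.1, bw.1⟩, ⟨bx.2, bye.2, bz.2, bw.2⟩⟩

theorem odd_add_of_mem_smallSol {a m n : ℕ} (ha : Odd a) {x y z w : ℤ}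
    (h : (x, y, z, w) ∈ smallSol a m n) : Odd (x + y) := by
  simp only [smallSol, Set.mem_ofPred_eq] at h
  have ha' : Odd (a : ℤ) := by exact_mod_cast ha
  have h1 : Odd ((a : ℤ) * (x ^ 2 + y ^ 2)) := by
    have : (a : ℤ) * (x ^ 2 + y ^ 2) = 2 * (n + m - a * z ^ 2 - m * w ^ 2) + a := by
      linear_combination h
    rw [this]
    exact (even_two_mul _).add_odd ha'
  have h2 := (Int.odd_mul.1 h1).2
  simpa [Int.odd_add, Int.odd_pow, Int.even_pow] using h2

/-- Because `a` is odd, the equation forces `X² + Y² + 2Z² ≡ 4 (mod 8)`, which leaves no mixed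
parities. -/
theorem parity_big {a m n : ℕ} (ha : Odd a) {x y z w : ℤ}
    (h : (x, y, z, w) ∈ bigSol a m n) :
    (Even x ∧ Even y ∧ Even z) ∨ (Odd x ∧ Odd y ∧ Odd z) := by
  simp only [bigSol, Set.mem_ofPred_eq] at h
  have hco : IsCoprime (8 : ℤ) (a : ℤ) := by
    have : Nat.Coprime 8 a := by
      rw [show 8 = 2 ^ 3 by norm_num]
      exact Nat.Coprime.pow_left 3 (Nat.coprime_two_left.2 ha)
    exact_mod_cast Nat.isCoprime_iff_coprime.2 this
  obtain ⟨k, hk⟩ : (8 : ℤ) ∣ x ^ 2 + y ^ 2 + 2 * z ^ 2 - 4 := by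
    refine hco.dvd_of_dvd_mul_left ⟨n + m - m * w ^ 2, ?_⟩
    linear_combination h
  have hodd : ∀ t : ℤ, Odd t → ∃ s, t ^ 2 = 4 * s + 1 := by
    rintro t ⟨s, rfl⟩
    exact ⟨s ^ 2 + s, by ring⟩
  have heven : ∀ t : ℤ, Even t → ∃ s, t ^ 2 = 4 * s := by
    rintro t ⟨s, rfl⟩
    exact ⟨s ^ 2, by ring⟩
  rcases Int.even_or_odd x with hx | hx <;> rcases Int.even_or_odd y with hy | hy <;>
    rcases Int.even_or_odd z with hz | hz
  · exact Or.inl ⟨hx, hy, hz⟩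
  · obtain ⟨_, h1⟩ := heven x hx
    obtain ⟨_, h2⟩ := heven y hy
    obtain ⟨_, h3⟩ := hodd z hz
    omega
  · obtain ⟨_, h1⟩ := heven x hx
    obtain ⟨_, h2⟩ := hodd y hy
    omega
  · obtain ⟨_, h1⟩ := heven x hx
    obtain ⟨_, h2⟩ := hodd y hy
    omega
  · obtain ⟨_, h1⟩ := hodd x hx
    obtain ⟨_, h2⟩ := heven y hy
    omega
  · obtain ⟨_, h1⟩ := hodd x hx
    obtain ⟨_, h2⟩ := heven y hy
    omega
  · obtain ⟨_, h1⟩ := hodd x hx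
    obtain ⟨_, h2⟩ := hodd y hy
    obtain ⟨_, h3⟩ := heven z hz
    omega
  · exact Or.inr ⟨hx, hy, hz⟩

theorem dbl_mem {a m n : ℕ} {p : ℤ × ℤ × ℤ × ℤ} : dbl p ∈ bigSol a m n ↔ p ∈ smallSol a m n := by
  simp only [dbl, bigSol, smallSol, Set.mem_ofPred_eq]
  constructor <;> intro h <;> linarith

theorem rotE_mem {a m n : ℕ} {p : ℤ × ℤ × ℤ × ℤ} :
    rotE p ∈ bigSol a m n ↔ p ∈ smallSol a m n := by
  simp only [rotE, bigSol, smallSol, Set.mem_ofPred_eq]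
  constructor <;> intro h <;> linarith

theorem rotO_mem {a m n : ℕ} {p : ℤ × ℤ × ℤ × ℤ} :
    rotO p ∈ bigSol a m n ↔ p ∈ smallSol a m n := by
  simp only [rotO, bigSol, smallSol, Set.mem_ofPred_eq]
  constructor <;> intro h <;> linarith

/-- Every triple of odd numbers comes from `rotE` or `rotO`, according to which of `(X + Y) / 2`
and `(X - Y) / 2` is even. -/
theorem exists_rot {x y z : ℤ} (w : ℤ) (hx : Odd x) (hy : Odd y) (hz : Odd z) :
    ∃ p : ℤ × ℤ × ℤ × ℤ, p.2.2.2 = w ∧ (rotE p = (x, y, z, w) ∨ rotO p = (x, y, z, w)) := by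
  obtain ⟨i, rfl⟩ := hx
  obtain ⟨j, rfl⟩ := hy
  obtain ⟨k, rfl⟩ := hz
  rcases Int.even_or_odd (i + j + 1) with ⟨s, hs⟩ | ⟨s, hs⟩
  · refine ⟨((i - j + 2 * k + 1) / 2, (i - j - 2 * k - 1) / 2, s, w), rfl, Or.inl ?_⟩
    simp only [rotE, Prod.mk.injEq, and_true]
    omega
  · refine ⟨((i + j + 1 + 2 * k + 1) / 2, (i + j + 1 - 2 * k - 1) / 2, (i - j) / 2, w), rfl,
      Or.inr ?_⟩
    simp only [rotO, Prod.mk.injEq, and_true]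
    omega

theorem bigSol_eq {a m n : ℕ} (ha : Odd a) :
    bigSol a m n = dbl '' smallSol a m n ∪
      (rotE '' smallSol a m n ∪ rotO '' smallSol a m n) := by
  ext ⟨x, y, z, w⟩
  constructor
  · intro h
    rcases parity_big ha h with ⟨hx, hy, hz⟩ | ⟨hx, hy, hz⟩
    · obtain ⟨i, rfl⟩ := hx.two_dvd
      obtain ⟨j, rfl⟩ := hy.two_dvd
      obtain ⟨k, rfl⟩ := hz.two_dvd
      exact Or.inl ⟨(i, j, k, w), dbl_mem.1 h, rfl⟩
    · obtain ⟨p, -, hp | hp⟩ := exists_rot w hx hy hz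
      · exact Or.inr (Or.inl ⟨p, rotE_mem.1 (hp ▸ h), hp⟩)
      · exact Or.inr (Or.inr ⟨p, rotO_mem.1 (hp ▸ h), hp⟩)
  · rintro (⟨p, hp, h⟩ | ⟨p, hp, h⟩ | ⟨p, hp, h⟩)
    · exact h ▸ dbl_mem.2 hp
    · exact h ▸ rotE_mem.2 hp
    · exact h ▸ rotO_mem.2 hp

theorem disjoint_rot {a m n : ℕ} (ha : Odd a) :
    Disjoint (rotE '' smallSol a m n) (rotO '' smallSol a m n) := by
  rw [Set.disjoint_left]
  rintro _ ⟨⟨x, y, z, w⟩, hp, rfl⟩ ⟨⟨x', y', z', w'⟩, hq, h⟩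
  obtain ⟨i, hi⟩ := odd_add_of_mem_smallSol ha hp
  obtain ⟨j, hj⟩ := odd_add_of_mem_smallSol ha hq
  simp only [rotE, rotO, Prod.mk.injEq] at h
  omega

theorem disjoint_dbl {a m n : ℕ} (ha : Odd a) :
    Disjoint (dbl '' smallSol a m n)
      (rotE '' smallSol a m n ∪ rotO '' smallSol a m n) := by
  rw [Set.disjoint_left]
  rintro _ ⟨⟨x, y, z, w⟩, hp, rfl⟩ (⟨⟨x', y', z', w'⟩, hq, h⟩ | ⟨⟨x', y', z', w'⟩, hq, h⟩)
  all_goals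
    obtain ⟨j, hj⟩ := odd_add_of_mem_smallSol ha hq
    simp only [rotE, rotO, dbl, Prod.mk.injEq] at h
    omega

theorem ncard_bigSol {a m n : ℕ} (ha : Odd a) (hm : 0 < m) :
    (bigSol a m n).ncard = 3 * (smallSol a m n).ncard := by
  have hf := smallSol_finite a m n ha hm
  rw [bigSol_eq ha, Set.ncard_union_eq (disjoint_dbl ha) (hf.image _)
      ((hf.image _).union (hf.image _)),
    Set.ncard_union_eq (disjoint_rot ha) (hf.image _) (hf.image _),
    Set.ncard_image_of_injective _ dbl_injective, Set.ncard_image_of_injective _ rotE_injective,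
    Set.ncard_image_of_injective _ rotO_injective]
  ring

theorem Nquad_big (a m n : ℕ) :
    Nquad a a (2 * a) (8 * m) (8 * n + 8 * m + 4 * a) = (bigSol a m n).ncard := by
  rw [Nquad, ← Nat.card_coe_set_eq]
  refine Nat.card_congr (Equiv.subtypeEquivRight ?_)
  intro p
  simp only [bigSol, Set.mem_ofPred_eq]
  push_cast
  exact eq_comm

theorem Nquad_small (a m n : ℕ) :
    Nquad a a (2 * a) (8 * m) (2 * n + 2 * m + a) = (smallSol a m n \ oddW).ncard := by
  have hinj : Function.Injective
      (fun p : ℤ × ℤ × ℤ × ℤ => (p.1, p.2.1, p.2.2.1, 2 * p.2.2.2)) := by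
    rintro ⟨x, y, z, w⟩ ⟨x', y', z', w'⟩ h
    simp only [Prod.mk.injEq] at h ⊢
    omega
  rw [Nquad, ← Set.coe_ofPred, Nat.card_coe_set_eq, ← Set.ncard_image_of_injective _ hinj]
  congr 1
  ext ⟨x, y, z, w⟩
  constructor
  · rintro ⟨⟨x', y', z', w'⟩, h, h'⟩
    simp only [Set.mem_ofPred_eq, Prod.mk.injEq] at h h'
    push_cast at h
    obtain ⟨rfl, rfl, rfl, rfl⟩ := h'
    simp only [Set.mem_sdiff, smallSol, oddW, Set.mem_ofPred_eq, Int.not_odd_iff_even]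
    exact ⟨by linarith, even_two_mul _⟩
  · simp only [Set.mem_sdiff, smallSol, oddW, Set.mem_ofPred_eq, Int.not_odd_iff_even]
    rintro ⟨h, hw⟩
    obtain ⟨v, rfl⟩ := hw.two_dvd
    refine ⟨(x, y, z, v), ?_, rfl⟩
    simp only [Set.mem_ofPred_eq]
    push_cast
    linarith

theorem eight_mul_tri (x : ℤ) : 8 * (x * (x - 1) / 2) = (2 * x - 1) ^ 2 - 1 := by
  have h : x * (x - 1) / 2 * 2 = x * (x - 1) := Int.ediv_mul_cancel (Int.even_mul_pred_self x).two_dvd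
  linear_combination 4 * h

/-- The substitution `X = 2x - 1` in each coordinate identifies the triangular representations of
`n` with the points of `bigSol` all of whose coordinates are odd. -/
theorem image_tri {a m n : ℕ} (ha : Odd a) :
    (fun p : ℤ × ℤ × ℤ × ℤ => (2 * p.1 - 1, 2 * p.2.1 - 1, 2 * p.2.2.1 - 1, 2 * p.2.2.2 - 1)) ''
      {p : ℤ × ℤ × ℤ × ℤ | (n : ℤ) = (a : ℕ) * (p.1 * (p.1 - 1) / 2)
        + (a : ℕ) * (p.2.1 * (p.2.1 - 1) / 2)
        + (2 * a : ℕ) * (p.2.2.1 * (p.2.2.1 - 1) / 2)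
        + (8 * m : ℕ) * (p.2.2.2 * (p.2.2.2 - 1) / 2)} =
      rotE '' (smallSol a m n ∩ oddW) ∪ rotO '' (smallSol a m n ∩ oddW) := by
  have key : ∀ x y z w : ℤ, ((n : ℤ) = (a : ℕ) * (x * (x - 1) / 2)
        + (a : ℕ) * (y * (y - 1) / 2) + (2 * a : ℕ) * (z * (z - 1) / 2)
        + (8 * m : ℕ) * (w * (w - 1) / 2)) ↔
      (2 * x - 1, 2 * y - 1, 2 * z - 1, 2 * w - 1) ∈ bigSol a m n := by
    intro x y z w
    have hx := eight_mul_tri x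
    have hy := eight_mul_tri y
    have hz := eight_mul_tri z
    have hw := eight_mul_tri w
    simp only [bigSol, Set.mem_ofPred_eq]
    push_cast
    generalize x * (x - 1) / 2 = X at *
    generalize y * (y - 1) / 2 = Y at *
    generalize z * (z - 1) / 2 = Z at *
    generalize w * (w - 1) / 2 = W at *
    constructor
    · intro h
      linear_combination (-8) * h - a * hx - a * hy - 2 * a * hz - 8 * m * hw
    · intro h
      have : 8 * (n : ℤ) = 8 * (a * X + a * Y + 2 * a * Z + 8 * m * W) := by
        linear_combination -h - a * hx - a * hy - 2 * a * hz - 8 * m * hw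
      linarith
  have hodd : ∀ t : ℤ, Odd t → ∃ s, t = 2 * s - 1 := by
    rintro t ⟨s, rfl⟩
    exact ⟨s + 1, by ring⟩
  have hodd' : ∀ t : ℤ, Odd (2 * t - 1) := fun t => ⟨t - 1, by ring⟩
  ext ⟨x, y, z, w⟩
  constructor
  · rintro ⟨⟨x', y', z', w'⟩, h, h'⟩
    rw [Set.mem_ofPred_eq, key] at h
    simp only at h'
    obtain ⟨p, hpw, hp⟩ := exists_rot (2 * w' - 1) (hodd' x') (hodd' y') (hodd' z')
    have hpo : p ∈ oddW := by
      simp only [oddW, Set.mem_ofPred_eq, hpw]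
      exact hodd' w'
    rw [← h']
    rcases hp with hp | hp
    · exact Or.inl ⟨p, ⟨rotE_mem.1 (hp ▸ h), hpo⟩, hp⟩
    · exact Or.inr ⟨p, ⟨rotO_mem.1 (hp ▸ h), hpo⟩, hp⟩
  · intro h
    have h1 : (x, y, z, w) ∈ bigSol a m n ∧ Odd x ∧ Odd w := by
      rcases h with ⟨⟨x', y', z', w'⟩, ⟨hp, ho⟩, h⟩ | ⟨⟨x', y', z', w'⟩, ⟨hp, ho⟩, h⟩
      · refine ⟨h ▸ rotE_mem.2 hp, ?_⟩
        obtain ⟨j, hj⟩ := odd_add_of_mem_smallSol ha hp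
        simp only [rotE, Prod.mk.injEq] at h
        obtain ⟨h1, -, -, rfl⟩ := h
        exact ⟨⟨z' + j, by omega⟩, ho⟩
      · refine ⟨h ▸ rotO_mem.2 hp, ?_⟩
        obtain ⟨j, hj⟩ := odd_add_of_mem_smallSol ha hp
        simp only [rotO, Prod.mk.injEq] at h
        obtain ⟨h1, -, -, rfl⟩ := h
        exact ⟨⟨z' + j, by omega⟩, ho⟩
    obtain ⟨hb, hx, hw⟩ := h1
    rcases parity_big ha hb with ⟨hx', -⟩ | ⟨-, hy, hz⟩
    · exact absurd hx (Int.not_odd_iff_even.2 hx')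
    obtain ⟨x', rfl⟩ := hodd x hx
    obtain ⟨y', rfl⟩ := hodd y hy
    obtain ⟨z', rfl⟩ := hodd z hz
    obtain ⟨w', rfl⟩ := hodd w hw
    exact ⟨(x', y', z', w'), (key x' y' z' w').2 hb, rfl⟩

theorem tquad_eq {a m n : ℕ} (ha : Odd a) (hm : 0 < m) :
    tquad a a (2 * a) (8 * m) n = 2 * (smallSol a m n ∩ oddW).ncard := by
  have hinj : Function.Injective (fun p : ℤ × ℤ × ℤ × ℤ =>
      (2 * p.1 - 1, 2 * p.2.1 - 1, 2 * p.2.2.1 - 1, 2 * p.2.2.2 - 1)) := by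
    rintro ⟨x, y, z, w⟩ ⟨x', y', z', w'⟩ h
    simp only [Prod.mk.injEq] at h ⊢
    omega
  have hf := (smallSol_finite a m n ha hm).inter_of_left oddW
  have hd := (disjoint_rot (m := m) (n := n) ha).mono
    (Set.image_mono (Set.inter_subset_left (t := oddW)))
    (Set.image_mono (Set.inter_subset_left (t := oddW)))
  rw [tquad, ← Set.coe_ofPred, Nat.card_coe_set_eq, ← Set.ncard_image_of_injective _ hinj,
    image_tri ha, Set.ncard_union_eq hd (hf.image _) (hf.image _),
    Set.ncard_image_of_injective _ rotE_injective, Set.ncard_image_of_injective _ rotO_injective]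
  ring

theorem stmt_0 (a m n : ℕ) (ha : Odd a) (hm : 0 < m) (hn : 0 < n) :
    (tquad a a (2 * a) (8 * m) n : ℚ) =
      2 / 3 * Nquad a a (2 * a) (8 * m) (8 * n + 8 * m + 4 * a) -
        2 * Nquad a a (2 * a) (8 * m) (2 * n + 2 * m + a) := by
  have hsplit := Set.ncard_inter_add_ncard_sdiff_eq_ncard (smallSol a m n) oddW
    (smallSol_finite a m n ha hm)
  rw [tquad_eq ha hm, Nquad_big, Nquad_small, ncard_bigSol ha hm, ← hsplit]
  push_cast
  ring
end

section
/- Let a be an odd positive integer, let k and m be nonnegative integers, and let n be a positive integer. Then t(a,3a,8k+2,8m+6;n) = (2/3)·N(a,3a,8k+2,8m+6; 8n+8k+8m+4a+8) − 2·N(a,3a,8k+2,8m+6; 2n+2k+2m+a+2). -/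
/-!
Put `c = 8k+2`, `d = 8m+6` and `M = 8n+8k+8m+4a+8`, so that `M = 8n + a + 3a + c + d`.
The substitution `x ↦ 2x-1` identifies `t(a,3a,c,d;n)` with the number of all-odd solutions of
`a x² + 3a y² + c z² + d w² = M`, and `x ↦ 2x` identifies `N(a,3a,c,d;M/4)` with the number of
all-even ones. Since `M ≡ 4a (mod 8)` with `a` odd, congruences modulo `8` force
`x ≡ y` and `z ≡ w (mod 2)`, and `x - y ≡ 2 (mod 4)` when `x` is even (`parity_of_sol`).

The form `x² + 3y²` is preserved by the involution `(x, y) ↦ ((x+3y)/2, (x-y)/2)`. Composed with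
`y ↦ ± y`, it shows that, for a prescribed parity of `z`, the solutions with `x, y` odd are
twice as many as those with `x, y` even (`card_odd_eq_two_mul_card_even`). Let `C` and `D` be the
numbers of solutions with `x, y` even and with `z, w` odd, respectively even. Then `N(M) = 3C + 3D`,
`t(n) = 2C` and `N(M/4) = D`, whence the identity.
-/

open scoped BigOperators

/-- The solutions of `a x² + 3a y² + c z² + d w² = M`. -/
def solSet (a c d M : ℤ) : Set (ℤ × ℤ × ℤ × ℤ) :=
  {p | M = a * p.1 ^ 2 + 3 * a * p.2.1 ^ 2 + c * p.2.2.1 ^ 2 + d * p.2.2.2 ^ 2}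

lemma solSet_finite {a c d M : ℤ} (ha : 0 < a) (hc : 0 < c) (hd : 0 < d) :
    (solSet a c d M).Finite := by
  have key : ∀ e x : ℤ, 0 < e → e * x ^ 2 ≤ M → x ∈ Set.Icc (-M) M := by
    intro e x he h
    have h1 : x ^ 2 ≤ M := by nlinarith [sq_nonneg x]
    constructor <;> nlinarith [sq_nonneg x, sq_nonneg (x - 1), sq_nonneg (x + 1),
      Int.le_self_sq x, Int.le_self_sq (-x)]
  have hI := Set.finite_Icc (-M) M
  refine (hI.prod (hI.prod (hI.prod hI))).subset ?_
  rintro ⟨x, y, z, w⟩ h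
  simp only [solSet, Set.mem_ofPred_eq] at h
  have h1 : 0 ≤ a * x ^ 2 := by positivity
  have h2 : 0 ≤ 3 * a * y ^ 2 := by positivity
  have h3 : 0 ≤ c * z ^ 2 := by positivity
  have h4 : 0 ≤ d * w ^ 2 := by positivity
  exact ⟨key a x ha (by linarith), key (3 * a) y (by linarith) (by linarith),
    key c z hc (by linarith), key d w hd (by linarith)⟩

lemma sq_cases (x : ℤ) : ∃ q, (x ^ 2 = 8 * q + 1 ∧ x % 2 = 1) ∨ (x ^ 2 = 8 * q ∧ x % 4 = 0) ∨
    (x ^ 2 = 8 * q + 4 ∧ x % 4 = 2) := by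
  have h : x % 4 = 0 ∨ x % 4 = 1 ∨ x % 4 = 2 ∨ x % 4 = 3 := by omega
  have e : x = 4 * (x / 4) + x % 4 := by omega
  generalize x / 4 = t at e
  rcases h with h | h | h | h <;> rw [h] at e
  · exact ⟨2 * t ^ 2, Or.inr (Or.inl ⟨by rw [e]; ring, h⟩)⟩
  · exact ⟨2 * t ^ 2 + t, Or.inl ⟨by rw [e]; ring, by omega⟩⟩
  · exact ⟨2 * t ^ 2 + 2 * t, Or.inr (Or.inr ⟨by rw [e]; ring, h⟩)⟩
  · exact ⟨2 * t ^ 2 + 3 * t + 1, Or.inl ⟨by rw [e]; ring, by omega⟩⟩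

/-- The congruences that a solution satisfies, read off modulo `8`. -/
lemma parity_of_sol {a k m n x y z w : ℤ} (ha : Odd a)
    (h : (x, y, z, w) ∈ solSet a (8 * k + 2) (8 * m + 6) (8 * n + 8 * k + 8 * m + 4 * a + 8)) :
    (x - y) % 2 = 0 ∧ (z - w) % 2 = 0 ∧ (x % 2 = 0 → (x - y) % 4 = 2) := by
  obtain ⟨b, rfl⟩ := ha
  simp only [solSet, Set.mem_ofPred_eq] at h
  obtain ⟨p, hp⟩ := sq_cases x
  obtain ⟨q, hq⟩ := sq_cases y
  obtain ⟨r, hr⟩ := sq_cases z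
  obtain ⟨s, hs⟩ := sq_cases w
  rcases hp with ⟨hp, hx⟩ | ⟨hp, hx⟩ | ⟨hp, hx⟩ <;>
  rcases hq with ⟨hq, hy⟩ | ⟨hq, hy⟩ | ⟨hq, hy⟩ <;>
  rcases hr with ⟨hr, hz⟩ | ⟨hr, hz⟩ | ⟨hr, hz⟩ <;>
  rcases hs with ⟨hs, hw⟩ | ⟨hs, hw⟩ | ⟨hs, hw⟩ <;>
  (rw [hp, hq, hr, hs] at h; ring_nf at h; omega)

/-- Solutions with `x`, `y` odd split according to whether `x ≡ y` or `x ≡ -y (mod 4)`; the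
involution `(x, y) ↦ ((x+3y)/2, (x-y)/2)`, precomposed with `y ↦ -y` in the second case,
maps each half bijectively onto the solutions with `x`, `y` even. -/
lemma card_odd_eq_two_mul_card_even {a c d M : ℤ} {S : Finset (ℤ × ℤ × ℤ × ℤ)}
    (hS : ∀ p, p ∈ S ↔ p ∈ solSet a c d M)
    (hpar : ∀ x y z w, (x, y, z, w) ∈ solSet a c d M →
      (x - y) % 2 = 0 ∧ (z - w) % 2 = 0 ∧ (x % 2 = 0 → (x - y) % 4 = 2))
    (e : ℤ) :
    (S.filter (fun p => p.1 % 2 = 1 ∧ p.2.2.1 % 2 = e)).card =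
      2 * (S.filter (fun p => p.1 % 2 = 0 ∧ p.2.2.1 % 2 = e)).card := by
  have htwist : ∀ {x y z w X Y : ℤ}, (x, y, z, w) ∈ S → X ^ 2 + 3 * Y ^ 2 = x ^ 2 + 3 * y ^ 2 →
      (X, Y, z, w) ∈ S := by
    intro x y z w X Y h hXY
    rw [hS] at h ⊢
    simp only [solSet, Set.mem_ofPred_eq] at h ⊢
    linear_combination h - a * hXY
  have hplus : (S.filter (fun p => (p.1 % 2 = 1 ∧ p.2.2.1 % 2 = e) ∧ (p.1 - p.2.1) % 4 = 0)).card =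
      (S.filter (fun p => p.1 % 2 = 0 ∧ p.2.2.1 % 2 = e)).card := by
    refine Finset.card_nbij'
      (fun p => ((p.1 + 3 * p.2.1) / 2, (p.1 - p.2.1) / 2, p.2.2.1, p.2.2.2))
      (fun p => ((p.1 + 3 * p.2.1) / 2, (p.1 - p.2.1) / 2, p.2.2.1, p.2.2.2)) ?_ ?_ ?_ ?_
    all_goals
      rintro ⟨x, y, z, w⟩ h
      simp only [Finset.coe_filter, Set.mem_ofPred_eq] at h ⊢
      have hp := hpar x y z w ((hS _).1 h.1)
    · obtain ⟨X, hX⟩ : ∃ X, X = (x + 3 * y) / 2 := ⟨_, rfl⟩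
      obtain ⟨Y, hY⟩ : ∃ Y, Y = (x - y) / 2 := ⟨_, rfl⟩
      rw [← hX, ← hY]
      have hx : x = 2 * Y + y := by omega
      have hX' : X = Y + 2 * y := by omega
      exact ⟨htwist h.1 (by rw [hX', hx]; ring), by omega, h.2.1.2⟩
    · obtain ⟨X, hX⟩ : ∃ X, X = (x + 3 * y) / 2 := ⟨_, rfl⟩
      obtain ⟨Y, hY⟩ : ∃ Y, Y = (x - y) / 2 := ⟨_, rfl⟩
      rw [← hX, ← hY]
      have hx : x = 2 * Y + y := by omega
      have hX' : X = Y + 2 * y := by omega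
      exact ⟨htwist h.1 (by rw [hX', hx]; ring), ⟨by omega, h.2.2⟩, by omega⟩
    · simp only [Prod.mk.injEq, and_true]
      omega
    · simp only [Prod.mk.injEq, and_true]
      omega
  have hminus :
      (S.filter (fun p => (p.1 % 2 = 1 ∧ p.2.2.1 % 2 = e) ∧ ¬ (p.1 - p.2.1) % 4 = 0)).card =
      (S.filter (fun p => p.1 % 2 = 0 ∧ p.2.2.1 % 2 = e)).card := by
    refine Finset.card_nbij'
      (fun p => ((p.1 - 3 * p.2.1) / 2, (p.1 + p.2.1) / 2, p.2.2.1, p.2.2.2))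
      (fun p => ((p.1 + 3 * p.2.1) / 2, (p.2.1 - p.1) / 2, p.2.2.1, p.2.2.2)) ?_ ?_ ?_ ?_
    all_goals
      rintro ⟨x, y, z, w⟩ h
      simp only [Finset.coe_filter, Set.mem_ofPred_eq] at h ⊢
      have hp := hpar x y z w ((hS _).1 h.1)
    · obtain ⟨X, hX⟩ : ∃ X, X = (x - 3 * y) / 2 := ⟨_, rfl⟩
      obtain ⟨Y, hY⟩ : ∃ Y, Y = (x + y) / 2 := ⟨_, rfl⟩
      rw [← hX, ← hY]
      have hx : x = 2 * Y - y := by omega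
      have hX' : X = Y - 2 * y := by omega
      exact ⟨htwist h.1 (by rw [hX', hx]; ring), by omega, h.2.1.2⟩
    · obtain ⟨X, hX⟩ : ∃ X, X = (x + 3 * y) / 2 := ⟨_, rfl⟩
      obtain ⟨Y, hY⟩ : ∃ Y, Y = (y - x) / 2 := ⟨_, rfl⟩
      rw [← hX, ← hY]
      have hx : x = y - 2 * Y := by omega
      have hX' : X = 2 * y - Y := by omega
      exact ⟨htwist h.1 (by rw [hX', hx]; ring), ⟨by omega, h.2.2⟩, by omega⟩
    · simp only [Prod.mk.injEq, and_true]
      omega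
    · simp only [Prod.mk.injEq, and_true]
      omega
  rw [← Finset.card_filter_add_card_filter_not (fun p : ℤ × ℤ × ℤ × ℤ => (p.1 - p.2.1) % 4 = 0),
    Finset.filter_filter, Finset.filter_filter, hplus, hminus, two_mul]

/-- Triangular numbers as odd squares, via `x ↦ 2x-1`. -/
lemma tquad_eq_card_odd {a c d n : ℕ} {M : ℤ} {S : Finset (ℤ × ℤ × ℤ × ℤ)}
    (hS : ∀ p, p ∈ S ↔ p ∈ solSet a c d M)
    (hM : M = 8 * n + 4 * a + c + d)
    (hpar : ∀ x y z w, (x, y, z, w) ∈ solSet a c d M →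
      (x - y) % 2 = 0 ∧ (z - w) % 2 = 0 ∧ (x % 2 = 0 → (x - y) % 4 = 2)) :
    tquad a (3 * a) c d n = (S.filter (fun p => p.1 % 2 = 1 ∧ p.2.2.1 % 2 = 1)).card := by
  have htri : ∀ x : ℤ, (2 * x - 1) ^ 2 = 8 * (x * (x - 1) / 2) + 1 := by
    intro x
    have h2 : 2 * (x * (x - 1) / 2) = x * (x - 1) :=
      Int.mul_ediv_cancel' (Int.even_mul_pred_self x).two_dvd
    linear_combination (-4) * h2
  rw [tquad, ← Nat.card_eq_finsetCard]
  refine Nat.card_congr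
    { toFun := fun p => ⟨(2 * p.1.1 - 1, 2 * p.1.2.1 - 1, 2 * p.1.2.2.1 - 1, 2 * p.1.2.2.2 - 1), ?_⟩
      invFun := fun p => ⟨((p.1.1 + 1) / 2, (p.1.2.1 + 1) / 2, (p.1.2.2.1 + 1) / 2,
        (p.1.2.2.2 + 1) / 2), ?_⟩
      left_inv := ?_
      right_inv := ?_ }
  · obtain ⟨⟨x, y, z, w⟩, h⟩ := p
    simp only [Finset.mem_filter, hS, solSet, Set.mem_ofPred_eq, htri] at h ⊢
    push_cast at h
    exact ⟨by linear_combination hM + 8 * h, by omega, by omega⟩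
  · obtain ⟨⟨x, y, z, w⟩, h⟩ := p
    simp only [Finset.mem_filter, hS] at h ⊢
    have hp := hpar x y z w h.1
    obtain ⟨X, hX⟩ : ∃ X, X = (x + 1) / 2 := ⟨_, rfl⟩
    obtain ⟨Y, hY⟩ : ∃ X, X = (y + 1) / 2 := ⟨_, rfl⟩
    obtain ⟨Z, hZ⟩ : ∃ X, X = (z + 1) / 2 := ⟨_, rfl⟩
    obtain ⟨W, hW⟩ : ∃ X, X = (w + 1) / 2 := ⟨_, rfl⟩
    rw [← hX, ← hY, ← hZ, ← hW]
    have h1 := h.1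
    simp only [solSet, Set.mem_ofPred_eq] at h1
    rw [show x = 2 * X - 1 by omega, show y = 2 * Y - 1 by omega, show z = 2 * Z - 1 by omega,
      show w = 2 * W - 1 by omega, htri, htri, htri, htri] at h1
    push_cast
    linarith
  · rintro ⟨⟨x, y, z, w⟩, h⟩
    simp only [Subtype.mk.injEq, Prod.mk.injEq]
    omega
  · rintro ⟨⟨x, y, z, w⟩, h⟩
    simp only [Finset.mem_filter, hS] at h
    have hp := hpar x y z w h.1
    simp only [Subtype.mk.injEq, Prod.mk.injEq]
    omega

/-- Solutions for `M / 4` as all-even solutions for `M`, via `x ↦ 2x`. -/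
lemma Nquad_eq_card_even {a c d n : ℕ} {M : ℤ} {S : Finset (ℤ × ℤ × ℤ × ℤ)}
    (hS : ∀ p, p ∈ S ↔ p ∈ solSet a c d M) (hM : M = 4 * n)
    (hpar : ∀ x y z w, (x, y, z, w) ∈ solSet a c d M →
      (x - y) % 2 = 0 ∧ (z - w) % 2 = 0 ∧ (x % 2 = 0 → (x - y) % 4 = 2)) :
    Nquad a (3 * a) c d n = (S.filter (fun p => p.1 % 2 = 0 ∧ p.2.2.1 % 2 = 0)).card := by
  rw [Nquad, ← Nat.card_eq_finsetCard]
  refine Nat.card_congr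
    { toFun := fun p => ⟨(2 * p.1.1, 2 * p.1.2.1, 2 * p.1.2.2.1, 2 * p.1.2.2.2), ?_⟩
      invFun := fun p => ⟨(p.1.1 / 2, p.1.2.1 / 2, p.1.2.2.1 / 2, p.1.2.2.2 / 2), ?_⟩
      left_inv := ?_
      right_inv := ?_ }
  · obtain ⟨⟨x, y, z, w⟩, h⟩ := p
    simp only [Finset.mem_filter, hS, solSet, Set.mem_ofPred_eq] at h ⊢
    push_cast at h
    exact ⟨by linear_combination hM + 4 * h, by omega, by omega⟩
  · obtain ⟨⟨x, y, z, w⟩, h⟩ := p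
    simp only [Finset.mem_filter, hS] at h ⊢
    have hp := hpar x y z w h.1
    obtain ⟨X, hX⟩ : ∃ X, X = x / 2 := ⟨_, rfl⟩
    obtain ⟨Y, hY⟩ : ∃ X, X = y / 2 := ⟨_, rfl⟩
    obtain ⟨Z, hZ⟩ : ∃ X, X = z / 2 := ⟨_, rfl⟩
    obtain ⟨W, hW⟩ : ∃ X, X = w / 2 := ⟨_, rfl⟩
    rw [← hX, ← hY, ← hZ, ← hW]
    have h1 := h.1
    simp only [solSet, Set.mem_ofPred_eq] at h1
    rw [show x = 2 * X by omega, show y = 2 * Y by omega, show z = 2 * Z by omega,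
      show w = 2 * W by omega] at h1
    push_cast
    linarith
  · rintro ⟨⟨x, y, z, w⟩, h⟩
    simp only [Subtype.mk.injEq, Prod.mk.injEq]
    omega
  · rintro ⟨⟨x, y, z, w⟩, h⟩
    simp only [Finset.mem_filter, hS] at h
    have hp := hpar x y z w h.1
    simp only [Subtype.mk.injEq, Prod.mk.injEq]
    omega

lemma card_eq_sum_parity (S : Finset (ℤ × ℤ × ℤ × ℤ)) :
    S.card = (S.filter (fun p => p.1 % 2 = 1 ∧ p.2.2.1 % 2 = 1)).card +
      (S.filter (fun p => p.1 % 2 = 1 ∧ p.2.2.1 % 2 = 0)).card +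
      ((S.filter (fun p => p.1 % 2 = 0 ∧ p.2.2.1 % 2 = 1)).card +
      (S.filter (fun p => p.1 % 2 = 0 ∧ p.2.2.1 % 2 = 0)).card) := by
  rw [← Finset.card_filter_add_card_filter_not (fun p : ℤ × ℤ × ℤ × ℤ => p.1 % 2 = 1),
    ← Finset.card_filter_add_card_filter_not (s := S.filter (fun p => p.1 % 2 = 1))
      (fun p : ℤ × ℤ × ℤ × ℤ => p.2.2.1 % 2 = 1),
    ← Finset.card_filter_add_card_filter_not (s := S.filter (fun p => ¬ p.1 % 2 = 1))
      (fun p : ℤ × ℤ × ℤ × ℤ => p.2.2.1 % 2 = 1)]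
  simp only [Finset.filter_filter, Int.emod_two_ne_one]

theorem stmt_1 (a k m n : ℕ) (ha : Odd a) (hn : 0 < n) :
    (tquad a (3 * a) (8 * k + 2) (8 * m + 6) n : ℚ) =
      2 / 3 * Nquad a (3 * a) (8 * k + 2) (8 * m + 6) (8 * n + 8 * k + 8 * m + 4 * a + 8) -
        2 * Nquad a (3 * a) (8 * k + 2) (8 * m + 6) (2 * n + 2 * k + 2 * m + a + 2) := by
  have ha0 : 0 < a := ha.pos
  have haZ : Odd (a : ℤ) := by exact_mod_cast ha
  obtain ⟨M, hM⟩ : ∃ M : ℤ, M = 8 * n + 8 * k + 8 * m + 4 * a + 8 := ⟨_, rfl⟩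
  have hfin : (solSet (a : ℤ) ((8 * k + 2 : ℕ) : ℤ) ((8 * m + 6 : ℕ) : ℤ) M).Finite :=
    solSet_finite (by omega) (by omega) (by omega)
  have hS : ∀ p, p ∈ hfin.toFinset ↔
      p ∈ solSet (a : ℤ) ((8 * k + 2 : ℕ) : ℤ) ((8 * m + 6 : ℕ) : ℤ) M :=
    fun p => hfin.mem_toFinset
  have hpar : ∀ x y z w, (x, y, z, w) ∈
      solSet (a : ℤ) ((8 * k + 2 : ℕ) : ℤ) ((8 * m + 6 : ℕ) : ℤ) M →
      (x - y) % 2 = 0 ∧ (z - w) % 2 = 0 ∧ (x % 2 = 0 → (x - y) % 4 = 2) := by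
    intro x y z w h
    rw [hM] at h
    push_cast at h
    exact parity_of_sol haZ h
  have hN : Nquad a (3 * a) (8 * k + 2) (8 * m + 6) (8 * n + 8 * k + 8 * m + 4 * a + 8) =
      hfin.toFinset.card := by
    rw [Nquad, ← Nat.card_eq_finsetCard]
    refine Nat.card_congr (Equiv.subtypeEquivRight fun p => ?_)
    rw [hS, solSet, Set.mem_ofPred_eq, hM]
    push_cast
    rfl
  have hodd := card_odd_eq_two_mul_card_even hS hpar 1
  have heven := card_odd_eq_two_mul_card_even hS hpar 0
  have hsum := card_eq_sum_parity hfin.toFinset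
  rw [tquad_eq_card_odd (n := n) hS (by rw [hM]; push_cast; ring) hpar,
    Nquad_eq_card_even (n := 2 * n + 2 * k + 2 * m + a + 2) hS (by rw [hM]; push_cast; ring) hpar,
    hN, hsum, heven, hodd]
  push_cast
  ring
end

section
/- Let n be a positive integer. If n is even, then t(1,1,2,8;n) = 4σ(2n+3). If n is odd, then t(1,1,2,8;n) = 4σ(2n+3) + 4·(−1)^((n−1)/2) · Σ r, where the sum is over all pairs (r,s) ∈ ℤ² with r ≡ 1 (mod 4) and 2n+3 = r² + 4s². -/
/-!
Write `m = 2n + 3`. The involution `y ↦ 1 - y` on the solutions of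
`n = x(x-1)/2 + y(y-1)/2 + 2·z(z-1)/2 + 8·w(w-1)/2` flips the parity of `x - y`, and the solutions
with `x - y` even correspond linearly to the quadruples with `a² + b² + c² + d² = m`, `a + b` odd
and `c - d ≡ 2 (mod 4)` (`card_even_diff`). Hence `t(1,1,2,8;n)` is twice the number of these.

By Jacobi's four-square theorem (`card_reps4`) there are `8σ(m)` representations of the odd number
`m` as a sum of four squares. Swapping `(a, b)` with `(c, d)` shows that `a + b` is odd in half of
them; then `c` and `d` have the same parity. If `m ≡ 3 (mod 4)`, both are odd, and changing the
sign of `c` exchanges `c - d ≡ 2` with `c - d ≡ 0 (mod 4)`, so that the count is `2σ(m)`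
(`card_quads_three`). If `m ≡ 1 (mod 4)`, write `c = 2s`, `d = 2t`: twice the count is `4σ(m)`
minus the sum of `(-1)^(s-t)` over all representations `m = a² + b² + 4s² + 4t²`
(`two_mul_card_quads_one`). The sum over `a, b, t` is evaluated by the coefficient form of Jacobi's
derivative formula `θ₁' = θ₂θ₃θ₄` (`jacobi_derivative`): for `k ≡ 1 (mod 4)`,
`∑ (-1)^t` over `k = a² + b² + 4t²` equals `4r` if `k = r²` with `r ≡ 1 (mod 4)`, and vanishes if `k`
is not a square. What is left is a sum over `m = r² + 4s²`, in which the sign `(-1)^s` depends on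
`m` only (`sgn_of_rep`).

The two- and four-square theorems and the derivative formula are all obtained from one elementary
identity of Liouville (`liouville`), on sums over the triples with `u² + de = n`, by three choices of
the function `F`. For the sums of squares, Liouville's identity shows that the divisor sum satisfies
the recurrence `∑ (n - (k+1)u²) f(n - u²) = 0` (`k = 2, 4`), which also holds for the number of
representations by `k` squares by symmetry, since `n` is the sum of the `k + 1` squares involved;
the recurrence determines `f` (`rec_unique`).
-/

open scoped BigOperators

namespace Quat

/-! ### Liouville's identity -/

/-- The triples `(u, d, e)` of integers with `u² + de = n` and `d, e > 0`. The box only serves to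
make this a `Finset`; see `mem_liouvilleSet`. -/
noncomputable def liouvilleSet (n : ℤ) : Finset (ℤ × ℤ × ℤ) :=
  (Finset.Icc (-n) n ×ˢ Finset.Icc (-n) n ×ˢ Finset.Icc (-n) n).filter
    fun p => p.1 ^ 2 + p.2.1 * p.2.2 = n ∧ 0 < p.2.1 ∧ 0 < p.2.2

lemma mem_liouvilleSet {n : ℤ} {p : ℤ × ℤ × ℤ} :
    p ∈ liouvilleSet n ↔ p.1 ^ 2 + p.2.1 * p.2.2 = n ∧ 0 < p.2.1 ∧ 0 < p.2.2 := by
  obtain ⟨u, d, e⟩ := p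
  simp only [liouvilleSet, Finset.mem_filter, Finset.mem_product, Finset.mem_Icc]
  refine ⟨fun h => h.2, fun h => ⟨?_, h⟩⟩
  obtain ⟨h, hd, he⟩ := h
  refine ⟨⟨?_, ?_⟩, ⟨?_, ?_⟩, ?_, ?_⟩ <;> nlinarith [sq_nonneg (u - 1), sq_nonneg (u + 1)]

/-- Liouville's identity. Writing `G` for the summand on the left, the involution
`(u, d, e) ↦ (e - u, 2u + d - e, e)` of the part `2u + d - e > 0` changes the sign of `G`, and the part
`2u + d - e < 0` is mapped bijectively to the part `d - e - 2u > 0` in such a way that `G` becomes the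
summand on the right. The two parts where these linear forms vanish are nonempty only when `n` is
a square. -/
theorem liouville (F : ℤ → ℤ → ℤ → ℤ) (h1 : ∀ x y z, F (-x) y z = -F x y z)
    (h2 : ∀ x y z, F x (-y) (-z) = F x y z) (n : ℤ) :
    2 * ∑ p ∈ liouvilleSet n, F (p.2.2 - 2 * p.1) (p.1 + p.2.1) (2 * p.1 + 2 * p.2.1 - p.2.2) =
      ∑ p ∈ liouvilleSet n, F (p.2.1 + p.2.2) p.1 (p.2.1 - p.2.2)
      + 2 * ∑ p ∈ (liouvilleSet n).filter (fun p => 2 * p.1 + p.2.1 - p.2.2 = 0),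
          F (p.2.2 - 2 * p.1) (p.1 + p.2.1) (2 * p.1 + 2 * p.2.1 - p.2.2)
      - ∑ p ∈ (liouvilleSet n).filter (fun p => p.2.1 - p.2.2 - 2 * p.1 = 0),
          F (p.2.1 + p.2.2) p.1 (p.2.1 - p.2.2) := by
  set G : ℤ × ℤ × ℤ → ℤ := fun p =>
    F (p.2.2 - 2 * p.1) (p.1 + p.2.1) (2 * p.1 + 2 * p.2.1 - p.2.2) with hG
  set H : ℤ × ℤ × ℤ → ℤ := fun p => F (p.2.1 + p.2.2) p.1 (p.2.1 - p.2.2) with hH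
  -- Both sums are split according to the sign of a linear form.
  have tri : ∀ (K : ℤ × ℤ × ℤ → ℤ) (c : ℤ × ℤ × ℤ → ℤ),
      ∑ p ∈ liouvilleSet n, K p = ∑ p ∈ (liouvilleSet n).filter (fun p => 0 < c p), K p
        + ∑ p ∈ (liouvilleSet n).filter (fun p => c p < 0), K p
        + ∑ p ∈ (liouvilleSet n).filter (fun p => c p = 0), K p := by
    intro K c
    rw [Finset.sum_filter, Finset.sum_filter, Finset.sum_filter, ← Finset.sum_add_distrib,
      ← Finset.sum_add_distrib]
    refine Finset.sum_congr rfl fun p _ => ?_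
    rcases lt_trichotomy (c p) 0 with h | h | h
    · simp [h, h.ne, h.le]
    · simp [h]
    · simp [h, h.ne', h.le]
  have hpos : ∑ p ∈ (liouvilleSet n).filter (fun p => 0 < 2 * p.1 + p.2.1 - p.2.2), G p = 0 := by
    have : ∑ p ∈ (liouvilleSet n).filter (fun p => 0 < 2 * p.1 + p.2.1 - p.2.2), G p =
        ∑ p ∈ (liouvilleSet n).filter (fun p => 0 < 2 * p.1 + p.2.1 - p.2.2), -G p := by
      refine Finset.sum_nbij' (fun p => (p.2.2 - p.1, 2 * p.1 + p.2.1 - p.2.2, p.2.2))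
        (fun p => (p.2.2 - p.1, 2 * p.1 + p.2.1 - p.2.2, p.2.2)) ?_ ?_ ?_ ?_ ?_
      · rintro ⟨u, d, e⟩ h
        simp only [Finset.mem_filter, mem_liouvilleSet] at h ⊢
        refine ⟨⟨?_, ?_, ?_⟩, ?_⟩ <;> grind
      · rintro ⟨u, d, e⟩ h
        simp only [Finset.mem_filter, mem_liouvilleSet] at h ⊢
        refine ⟨⟨?_, ?_, ?_⟩, ?_⟩ <;> grind
      · rintro ⟨u, d, e⟩ h
        ext <;> simp; ring
      · rintro ⟨u, d, e⟩ h
        ext <;> simp; ring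
      · rintro ⟨u, d, e⟩ h
        simp only [hG]
        rw [← h1]
        congr 1 <;> ring
    rw [Finset.sum_neg_distrib] at this
    omega
  have hneg : ∑ p ∈ (liouvilleSet n).filter (fun p => 2 * p.1 + p.2.1 - p.2.2 < 0), G p =
      ∑ p ∈ (liouvilleSet n).filter (fun p => 0 < p.2.1 - p.2.2 - 2 * p.1), H p := by
    refine Finset.sum_nbij' (fun p => (-(p.1 + p.2.1), p.2.2 - 2 * p.1 - p.2.1, p.2.1))
        (fun p => (-p.1 - p.2.2, p.2.2, p.2.1 - 2 * p.1 - p.2.2)) ?_ ?_ ?_ ?_ ?_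
    · rintro ⟨u, d, e⟩ h
      simp only [Finset.mem_filter, mem_liouvilleSet] at h ⊢
      refine ⟨⟨?_, ?_, ?_⟩, ?_⟩ <;> grind
    · rintro ⟨u, d, e⟩ h
      simp only [Finset.mem_filter, mem_liouvilleSet] at h ⊢
      refine ⟨⟨?_, ?_, ?_⟩, ?_⟩ <;> grind
    · rintro ⟨u, d, e⟩ h
      ext <;> simp <;> ring
    · rintro ⟨u, d, e⟩ h
      ext <;> simp <;> ring
    · rintro ⟨u, d, e⟩ h
      simp only [hG, hH]
      rw [← h2]
      congr 1 <;> ring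
  have hsym : ∑ p ∈ (liouvilleSet n).filter (fun p => p.2.1 - p.2.2 - 2 * p.1 < 0), H p =
      ∑ p ∈ (liouvilleSet n).filter (fun p => 0 < p.2.1 - p.2.2 - 2 * p.1), H p := by
    refine Finset.sum_nbij' (fun p => (-p.1, p.2.2, p.2.1))
        (fun p => (-p.1, p.2.2, p.2.1)) ?_ ?_ ?_ ?_ ?_
    · rintro ⟨u, d, e⟩ h
      simp only [Finset.mem_filter, mem_liouvilleSet] at h ⊢
      refine ⟨⟨?_, ?_, ?_⟩, ?_⟩ <;> grind
    · rintro ⟨u, d, e⟩ h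
      simp only [Finset.mem_filter, mem_liouvilleSet] at h ⊢
      refine ⟨⟨?_, ?_, ?_⟩, ?_⟩ <;> grind
    · rintro ⟨u, d, e⟩ h
      simp
    · rintro ⟨u, d, e⟩ h
      simp
    · rintro ⟨u, d, e⟩ h
      simp only [hH]
      rw [← h2]
      congr 1 <;> ring
  have t1 := tri G (fun p => 2 * p.1 + p.2.1 - p.2.2)
  have t2 := tri H (fun p => p.2.1 - p.2.2 - 2 * p.1)
  rw [t1, t2, hpos, hneg, hsym]
  ring

/-- When `n = l²` with `l > 0`, the degenerate triples are `(l - j, j, 2l - j)` with `0 < j < 2l`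
and `(j, l + j, l - j)` with `-l < j < l`. -/
lemma liouville_sq (F : ℤ → ℤ → ℤ → ℤ) (h1 : ∀ x y z, F (-x) y z = -F x y z)
    (h2 : ∀ x y z, F x (-y) (-z) = F x y z) {n l : ℤ} (hl : 0 < l) (hn : n = l ^ 2) :
    2 * ∑ p ∈ liouvilleSet n, F (p.2.2 - 2 * p.1) (p.1 + p.2.1) (2 * p.1 + 2 * p.2.1 - p.2.2) =
      ∑ p ∈ liouvilleSet n, F (p.2.1 + p.2.2) p.1 (p.2.1 - p.2.2)
      + 2 * ∑ j ∈ Finset.Icc 1 (2 * l - 1), F j l j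
      - ∑ j ∈ Finset.Ioo (-l) l, F (2 * l) j (2 * j) := by
  rw [liouville F h1 h2]
  congr 1
  · congr 2
    refine Finset.sum_nbij' (fun p => p.2.1) (fun j => (l - j, j, 2 * l - j)) ?_ ?_ ?_ ?_ ?_
    · rintro ⟨u, d, e⟩ h
      simp only [Finset.mem_filter, mem_liouvilleSet, Finset.mem_Icc] at h ⊢
      have : (u + d) ^ 2 = l ^ 2 := by grind
      have : u + d = l := by
        rcases sq_eq_sq_iff_eq_or_eq_neg.1 this with h | h <;> grind
      omega
    · intro j h
      simp only [Finset.mem_filter, mem_liouvilleSet, Finset.mem_Icc] at h ⊢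
      refine ⟨⟨?_, ?_, ?_⟩, ?_⟩ <;> grind
    · rintro ⟨u, d, e⟩ h
      simp only [Finset.mem_filter, mem_liouvilleSet] at h ⊢
      have : (u + d) ^ 2 = l ^ 2 := by grind
      have : u + d = l := by
        rcases sq_eq_sq_iff_eq_or_eq_neg.1 this with h | h <;> grind
      ext <;> simp <;> omega
    · intro j h
      rfl
    · rintro ⟨u, d, e⟩ h
      simp only [Finset.mem_filter, mem_liouvilleSet] at h ⊢
      have : (u + d) ^ 2 = l ^ 2 := by grind
      have : u + d = l := by
        rcases sq_eq_sq_iff_eq_or_eq_neg.1 this with h | h <;> grind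
      congr 1 <;> omega
  · refine Finset.sum_nbij' (fun p => p.1) (fun j => (j, l + j, l - j)) ?_ ?_ ?_ ?_ ?_
    · rintro ⟨u, d, e⟩ h
      simp only [Finset.mem_filter, mem_liouvilleSet, Finset.mem_Ioo] at h ⊢
      have : (u + e) ^ 2 = l ^ 2 := by grind
      have : u + e = l := by
        rcases sq_eq_sq_iff_eq_or_eq_neg.1 this with h | h <;> grind
      omega
    · intro j h
      simp only [Finset.mem_filter, mem_liouvilleSet, Finset.mem_Ioo] at h ⊢
      refine ⟨⟨?_, ?_, ?_⟩, ?_⟩ <;> grind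
    · rintro ⟨u, d, e⟩ h
      simp only [Finset.mem_filter, mem_liouvilleSet] at h ⊢
      have : (u + e) ^ 2 = l ^ 2 := by grind
      have : u + e = l := by
        rcases sq_eq_sq_iff_eq_or_eq_neg.1 this with h | h <;> grind
      ext <;> simp <;> omega
    · intro j h
      rfl
    · rintro ⟨u, d, e⟩ h
      simp only [Finset.mem_filter, mem_liouvilleSet] at h ⊢
      have : (u + e) ^ 2 = l ^ 2 := by grind
      have : u + e = l := by
        rcases sq_eq_sq_iff_eq_or_eq_neg.1 this with h | h <;> grind
      congr 1 <;> omega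

lemma liouville_not_sq (F : ℤ → ℤ → ℤ → ℤ) (h1 : ∀ x y z, F (-x) y z = -F x y z)
    (h2 : ∀ x y z, F x (-y) (-z) = F x y z) {n : ℤ} (hn : ∀ l, n ≠ l ^ 2) :
    2 * ∑ p ∈ liouvilleSet n, F (p.2.2 - 2 * p.1) (p.1 + p.2.1) (2 * p.1 + 2 * p.2.1 - p.2.2) =
      ∑ p ∈ liouvilleSet n, F (p.2.1 + p.2.2) p.1 (p.2.1 - p.2.2) := by
  rw [liouville F h1 h2, Finset.filter_eq_empty_iff.2, Finset.filter_eq_empty_iff.2]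
  · simp
  · rintro ⟨u, d, e⟩ h h'
    rw [mem_liouvilleSet] at h
    exact hn (u + e) (by grind)
  · rintro ⟨u, d, e⟩ h h'
    rw [mem_liouvilleSet] at h
    exact hn (u + d) (by grind)

/-! ### Signs, characters and sums over the triples -/

/-- The nontrivial Dirichlet character modulo 4. -/
def chi (a : ℤ) : ℤ := if a % 4 = 1 then 1 else if a % 4 = 3 then -1 else 0

/-- The sign `(-1)^a`. -/
def sgn (a : ℤ) : ℤ := if a % 2 = 0 then 1 else -1

lemma chi_neg (a : ℤ) : chi (-a) = -chi a := by
  unfold chi; split_ifs <;> omega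

lemma sgn_neg (a : ℤ) : sgn (-a) = sgn a := by
  unfold sgn; split_ifs <;> omega

lemma sgn_add_one (a : ℤ) : sgn (a + 1) = -sgn a := by
  unfold sgn; split_ifs <;> omega

lemma chi_two_mul (a : ℤ) : chi (2 * a) = 0 := by
  unfold chi; split_ifs <;> omega

lemma chi_two_mul_sub (k e : ℤ) : chi (2 * k - e) = -(sgn k * chi e) := by
  unfold chi sgn; split_ifs <;> omega

lemma chi_two_mul_add_one (a : ℤ) : chi (2 * a + 1) = sgn a := by
  unfold chi sgn; split_ifs <;> omega

lemma sgn_mul_self (a : ℤ) : sgn a * sgn a = 1 := by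
  unfold sgn; split_ifs <;> norm_num

lemma sum_neg_fst (K : ℤ × ℤ × ℤ → ℤ) (n : ℤ) :
    ∑ p ∈ liouvilleSet n, K (-p.1, p.2.1, p.2.2) = ∑ p ∈ liouvilleSet n, K p := by
  refine Finset.sum_nbij' (fun p => (-p.1, p.2.1, p.2.2)) (fun p => (-p.1, p.2.1, p.2.2))
    ?_ ?_ ?_ ?_ ?_ <;> rintro ⟨u, d, e⟩ h <;> simp_all [mem_liouvilleSet]

lemma sum_swap (K : ℤ × ℤ × ℤ → ℤ) (n : ℤ) :
    ∑ p ∈ liouvilleSet n, K (p.1, p.2.2, p.2.1) = ∑ p ∈ liouvilleSet n, K p := by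
  refine Finset.sum_nbij' (fun p => (p.1, p.2.2, p.2.1)) (fun p => (p.1, p.2.2, p.2.1))
    ?_ ?_ ?_ ?_ ?_ <;> rintro ⟨u, d, e⟩ h <;> simp_all [mem_liouvilleSet, mul_comm]

lemma sum_eq_zero_of_odd (K : ℤ × ℤ × ℤ → ℤ) (n : ℤ)
    (h : ∀ u d e, K (-u, d, e) = -K (u, d, e)) : ∑ p ∈ liouvilleSet n, K p = 0 := by
  have := sum_neg_fst K n
  simp only [h, Finset.sum_neg_distrib] at this
  have e : ∑ p ∈ liouvilleSet n, K (p.1, p.2.1, p.2.2) = ∑ p ∈ liouvilleSet n, K p := rfl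
  omega

/-- Closed form of a sum over `0 < j < 2l`, by induction on `l`. -/
lemma sum_Icc_odd (f H : ℤ → ℤ) (h1 : H 1 = f 1)
    (hs : ∀ l, 1 ≤ l → H (l + 1) = H l + f (2 * l) + f (2 * l + 1)) (l : ℤ) (hl : 1 ≤ l) :
    ∑ j ∈ Finset.Icc 1 (2 * l - 1), f j = H l := by
  induction l, hl using Int.leInduction with
  | base => simp [h1]
  | succ l hl ih =>
    have : Finset.Icc 1 (2 * (l + 1) - 1) =
        insert (2 * l + 1) (insert (2 * l) (Finset.Icc 1 (2 * l - 1))) := by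
      ext x; simp only [Finset.mem_Icc, Finset.mem_insert]; omega
    rw [this, Finset.sum_insert, Finset.sum_insert, ih, hs l hl]
    · ring
    · simp
    · simp only [Finset.mem_Icc, Finset.mem_insert]; omega

/-- Closed form of a sum over `-l < j < l`, by induction on `l`. -/
lemma sum_Ioo_symm (f H : ℤ → ℤ) (h1 : H 1 = f 0)
    (hs : ∀ l, 1 ≤ l → H (l + 1) = H l + f l + f (-l)) (l : ℤ) (hl : 1 ≤ l) :
    ∑ j ∈ Finset.Ioo (-l) l, f j = H l := by
  induction l, hl using Int.leInduction with
  | base =>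
    have : Finset.Ioo (-1 : ℤ) 1 = {0} := by
      ext x; simp only [Finset.mem_Ioo, Finset.mem_singleton]; omega
    rw [this, h1, Finset.sum_singleton]
  | succ l hl ih =>
    have : Finset.Ioo (-(l + 1)) (l + 1) =
        insert (-l) (insert l (Finset.Ioo (-l) l)) := by
      ext x; simp only [Finset.mem_Ioo, Finset.mem_insert]; omega
    rw [this, Finset.sum_insert, Finset.sum_insert, ih, hs l hl]
    · ring
    · simp
    · simp only [Finset.mem_Ioo, Finset.mem_insert]; omega

/-! ### The recurrence for sums of two squares -/

/-- The two summands differ by a function odd in `u`; the right-hand side is the left-hand side of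
Liouville's identity for `F x y z = -(-1)^y χ(z) x y`. -/
lemma two_rec_aux (n : ℤ) :
    ∑ p ∈ liouvilleSet n, chi p.2.2 * (p.2.1 * p.2.2 - 2 * p.1 ^ 2) =
    ∑ p ∈ liouvilleSet n, -sgn (p.1 + p.2.1) * chi (2 * p.1 + 2 * p.2.1 - p.2.2) *
      (p.2.2 - 2 * p.1) * (p.1 + p.2.1) := by
  rw [← sub_eq_zero, ← Finset.sum_sub_distrib]
  refine sum_eq_zero_of_odd (fun p => chi p.2.2 * (p.2.1 * p.2.2 - 2 * p.1 ^ 2) -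
    -sgn (p.1 + p.2.1) * chi (2 * p.1 + 2 * p.2.1 - p.2.2) *
      (p.2.2 - 2 * p.1) * (p.1 + p.2.1)) n fun u d e => ?_
  simp only [← mul_add, chi_two_mul_sub]
  linear_combination (-chi e * (e - 2 * u) * (u + d)) * sgn_mul_self (u + d)
    + (-chi e * (e + 2 * u) * (-u + d)) * sgn_mul_self (-u + d)

/-- First symmetry required by `liouville`, for the function of the two-square recurrence. -/
lemma two_F1 (x y z : ℤ) : -sgn y * chi z * (-x) * y = -(-sgn y * chi z * x * y) := by ring

/-- Second symmetry required by `liouville`, for the function of the two-square recurrence. -/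
lemma two_F2 (x y z : ℤ) : -sgn (-y) * chi (-z) * x * (-y) = -sgn y * chi z * x * y := by
  rw [sgn_neg, chi_neg]; ring

lemma two_R (n : ℤ) : ∑ p ∈ liouvilleSet n, -sgn p.1 * chi (p.2.1 - p.2.2) *
    (p.2.1 + p.2.2) * p.1 = 0 :=
  sum_eq_zero_of_odd (fun p => -sgn p.1 * chi (p.2.1 - p.2.2) * (p.2.1 + p.2.2) * p.1) n
    fun u d e => by simp only [sgn_neg]; ring

lemma two_rec_not_sq {n : ℤ} (hn : ∀ l, n ≠ l ^ 2) :
    ∑ p ∈ liouvilleSet n, chi p.2.2 * (p.2.1 * p.2.2 - 2 * p.1 ^ 2) = 0 := by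
  have := liouville_not_sq (fun x y z => -sgn y * chi z * x * y) two_F1 two_F2 hn
  rw [← two_rec_aux, two_R] at this
  omega

lemma two_rec_sq {n l : ℤ} (hl : 0 < l) (hn : n = l ^ 2) :
    ∑ p ∈ liouvilleSet n, chi p.2.2 * (p.2.1 * p.2.2 - 2 * p.1 ^ 2) = l ^ 2 := by
  have := liouville_sq (fun x y z => -sgn y * chi z * x * y) two_F1 two_F2 hl hn
  rw [← two_rec_aux, two_R] at this
  have e1 : ∑ j ∈ Finset.Icc 1 (2 * l - 1), -sgn l * chi j * j * l = l ^ 2 := by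
    have := sum_Icc_odd (fun j => chi j * j) (fun l => -sgn l * l) (by decide) (fun l _ => by
      simp only [sgn_add_one, chi_two_mul, chi_two_mul_add_one]; ring) l hl
    calc _ = -sgn l * l * ∑ j ∈ Finset.Icc 1 (2 * l - 1), chi j * j := by
          rw [Finset.mul_sum]; exact Finset.sum_congr rfl fun j _ => by ring
      _ = _ := by rw [this]; linear_combination l ^ 2 * sgn_mul_self l
  have e2 : ∑ j ∈ Finset.Ioo (-l) l, -sgn j * chi (2 * j) * (2 * l) * j = 0 :=
    Finset.sum_eq_zero fun j _ => by rw [chi_two_mul]; ring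
  rw [e1, e2] at this
  omega

/-! ### The recurrence for sums of four squares -/

/-- The weight `-1` on pairs of even numbers and `1` on all others: `∑ wt d e * d` over `de = n` is
`σ(n) - 4σ(n/4)`. -/
def wt (d e : ℤ) : ℤ := if d % 2 = 0 ∧ e % 2 = 0 then -1 else 1

/-- The extension of the weight `wt` to the arguments of `F` in Liouville's identity for `n`, see
`eps_left` and `eps_right`. -/
def eps (n x y : ℤ) : ℤ := if x % 2 = 0 ∧ (y - n) % 2 = 0 then -1 else 1

lemma parity_mem {n u d e : ℤ} (h : (u, d, e) ∈ liouvilleSet n) :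
    n % 2 = (u + d * e) % 2 := by
  have := (mem_liouvilleSet.1 h).1
  rw [← this]
  rcases Int.emod_two_eq u with h | h <;> simp [Int.add_emod, pow_two, Int.mul_emod, h]

lemma eps_left {n u d e : ℤ} (h : (u, d, e) ∈ liouvilleSet n) :
    eps n (e - 2 * u) (u + d) = wt d e := by
  have := parity_mem h
  unfold eps wt
  rcases Int.emod_two_eq d with h | h <;> rcases Int.emod_two_eq e with h' | h' <;>
  · have : (d * e) % 2 = ((d % 2) * (e % 2)) % 2 := Int.mul_emod _ _ _
    rw [h, h'] at this
    split_ifs <;> omega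

lemma eps_right {n u d e : ℤ} (h : (u, d, e) ∈ liouvilleSet n) :
    eps n (d + e) u = wt d e := by
  have := parity_mem h
  unfold eps wt
  rcases Int.emod_two_eq d with h | h <;> rcases Int.emod_two_eq e with h' | h' <;>
  · have : (d * e) % 2 = ((d % 2) * (e % 2)) % 2 := Int.mul_emod _ _ _
    rw [h, h'] at this
    split_ifs <;> omega

lemma wt_comm (d e : ℤ) : wt d e = wt e d := by unfold wt; split_ifs <;> omega

/-- Both sides of Liouville's identity for `F x y z = eps n x y * (x y²)`, up to summands odd in `u` and
the exchange of `d` and `e`. -/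
lemma four_rec_aux (n : ℤ) :
    2 * ∑ p ∈ liouvilleSet n, eps n (p.2.2 - 2 * p.1) (p.1 + p.2.1) *
      ((p.2.2 - 2 * p.1) * (p.1 + p.2.1) ^ 2) =
    ∑ p ∈ liouvilleSet n, eps n (p.2.1 + p.2.2) p.1 * ((p.2.1 + p.2.2) * p.1 ^ 2) +
    2 * ∑ p ∈ liouvilleSet n, wt p.2.1 p.2.2 * (p.2.1 * (p.2.1 * p.2.2 - 4 * p.1 ^ 2)) := by
  have hL : ∑ p ∈ liouvilleSet n, eps n (p.2.2 - 2 * p.1) (p.1 + p.2.1) *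
      ((p.2.2 - 2 * p.1) * (p.1 + p.2.1) ^ 2) = ∑ p ∈ liouvilleSet n, wt p.2.1 p.2.2 *
      (p.2.2 * p.1 ^ 2 + p.2.1 * (p.2.1 * p.2.2 - 4 * p.1 ^ 2)) := by
    rw [← sub_eq_zero, ← Finset.sum_sub_distrib]
    rw [← sum_eq_zero_of_odd (fun p => wt p.2.1 p.2.2 * ((p.2.2 - 2 * p.1) * (p.1 + p.2.1) ^ 2 -
      (p.2.2 * p.1 ^ 2 + p.2.1 * (p.2.1 * p.2.2 - 4 * p.1 ^ 2)))) n fun u d e => by ring]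
    refine Finset.sum_congr rfl ?_
    rintro ⟨u, d, e⟩ h
    rw [eps_left h]; ring
  have hR : ∑ p ∈ liouvilleSet n, eps n (p.2.1 + p.2.2) p.1 * ((p.2.1 + p.2.2) * p.1 ^ 2) =
      2 * ∑ p ∈ liouvilleSet n, wt p.2.1 p.2.2 * (p.2.2 * p.1 ^ 2) := by
    have := sum_swap (fun p => wt p.2.1 p.2.2 * (p.2.2 * p.1 ^ 2)) n
    simp only at this
    rw [two_mul]
    nth_rw 1 [← this]
    rw [← Finset.sum_add_distrib]
    refine Finset.sum_congr rfl ?_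
    rintro ⟨u, d, e⟩ h
    rw [eps_right h, wt_comm e d]; ring
  rw [hL, hR, ← mul_add, ← Finset.sum_add_distrib]
  simp only [mul_add]

lemma four_F1 (n x y _z : ℤ) : eps n (-x) y * (-x * y ^ 2) = -(eps n x y * (x * y ^ 2)) := by
  have : eps n (-x) y = eps n x y := by unfold eps; split_ifs <;> omega
  rw [this]; ring

lemma four_F2 (n x y _z : ℤ) : eps n x (-y) * (x * (-y) ^ 2) = eps n x y * (x * y ^ 2) := by
  have : eps n x (-y) = eps n x y := by unfold eps; split_ifs <;> omega
  rw [this]; ring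

lemma four_rec_not_sq {n : ℤ} (hn : ∀ l, n ≠ l ^ 2) :
    ∑ p ∈ liouvilleSet n, wt p.2.1 p.2.2 * (p.2.1 * (p.2.1 * p.2.2 - 4 * p.1 ^ 2)) = 0 := by
  have := liouville_not_sq (fun x y _ => eps n x y * (x * y ^ 2)) (four_F1 n) (four_F2 n) hn
  rw [four_rec_aux] at this
  omega

lemma four_rec_sq {n l : ℤ} (hl : 0 < l) (hn : n = l ^ 2) :
    ∑ p ∈ liouvilleSet n, wt p.2.1 p.2.2 * (p.2.1 * (p.2.1 * p.2.2 - 4 * p.1 ^ 2)) = l ^ 2 := by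
  have := liouville_sq (fun x y _ => eps n x y * (x * y ^ 2)) (four_F1 n) (four_F2 n) hl hn
  rw [four_rec_aux] at this
  have hp : n % 2 = l % 2 := by
    rw [hn]; rcases Int.emod_two_eq l with h | h <;> simp [pow_two, Int.mul_emod, h]
  have e1 : ∑ j ∈ Finset.Icc 1 (2 * l - 1), eps n j l * (j * l ^ 2) = l ^ 3 := by
    have := sum_Icc_odd (fun j => -sgn j * j) (fun l => l) (by decide) (fun l _ => by
      have : sgn (2 * l) = 1 := by simp [sgn]
      simp only [sgn_add_one, this]; ring) l hl
    calc _ = l ^ 2 * ∑ j ∈ Finset.Icc 1 (2 * l - 1), -sgn j * j := by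
          rw [Finset.mul_sum]; refine Finset.sum_congr rfl fun j _ => ?_
          have : eps n j l = -sgn j := by unfold eps sgn; split_ifs <;> omega
          rw [this]; ring
      _ = _ := by rw [this]; ring
  have e2 : ∑ j ∈ Finset.Ioo (-l) l, eps n (2 * l) j * (2 * l * j ^ 2) =
      2 * l ^ 2 * (l - 1) := by
    have := sum_Ioo_symm (fun j => sgn j * j ^ 2) (fun l => -sgn l * l * (l - 1)) (by decide)
      (fun l _ => by simp only [sgn_neg, sgn_add_one]; ring) l hl
    calc _ = -sgn l * (2 * l) * ∑ j ∈ Finset.Ioo (-l) l, sgn j * j ^ 2 := by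
          rw [Finset.mul_sum]; refine Finset.sum_congr rfl fun j _ => ?_
          have : eps n (2 * l) j = -(sgn l * sgn j) := by unfold eps sgn; split_ifs <;> omega
          rw [this]; ring
      _ = _ := by rw [this]; linear_combination 2 * l ^ 2 * (l - 1) * sgn_mul_self l
  rw [e1, e2] at this
  linarith

/-! ### The identity behind Jacobi's derivative formula -/

/-- For `F x y z = χ(x) χ(y) χ(z)`, the summand on the left of Liouville's identity is the one of
interest up to a term odd in `u`. Everything depends only on the residues modulo 4. -/
lemma deriv_term {k u d e : ℤ} (hk : k % 4 = 1) (h : (u, d, e) ∈ liouvilleSet k) :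
    chi (e - 2 * u) * chi (u + d) * chi (2 * u + 2 * d - e) =
      (if u % 2 = 0 then sgn (u / 2) * chi d else 0) -
      (if d % 4 = 0 ∧ e % 2 = 1 then chi u else 0) := by
  have h0 := (mem_liouvilleSet.1 h).1
  have hm : ((u % 4) * (u % 4) + (d % 4) * (e % 4)) % 4 = 1 := by
    rw [← hk, ← h0]; simp [Int.add_emod, pow_two, Int.mul_emod]
  clear h h0 hk
  have hu : u % 4 = 0 ∨ u % 4 = 1 ∨ u % 4 = 2 ∨ u % 4 = 3 := by omega
  have hd : d % 4 = 0 ∨ d % 4 = 1 ∨ d % 4 = 2 ∨ d % 4 = 3 := by omega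
  have he : e % 4 = 0 ∨ e % 4 = 1 ∨ e % 4 = 2 ∨ e % 4 = 3 := by omega
  have hc : ∀ {a b : ℤ}, a % 4 = b % 4 → chi a = chi b := fun h => by unfold chi; rw [h]
  have hs : sgn (u / 2) = if u % 4 < 2 then 1 else -1 := by
    unfold sgn; split_ifs <;> omega
  have c1 : chi (e - 2 * u) = chi (e % 4 - 2 * (u % 4)) := hc (by omega)
  have c2 : chi (u + d) = chi (u % 4 + d % 4) := hc (by omega)
  have c3 : chi (2 * u + 2 * d - e) = chi (2 * (u % 4) + 2 * (d % 4) - e % 4) := hc (by omega)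
  have c4 : chi d = chi (d % 4) := hc (by omega)
  have c5 : chi u = chi (u % 4) := hc (by omega)
  have c6 : u % 2 = (u % 4) % 2 := by omega
  have c7 : e % 2 = (e % 4) % 2 := by omega
  rw [hs, c1, c2, c3, c4, c5, c6, c7]
  rcases hu with hu | hu | hu | hu <;> rcases hd with hd | hd | hd | hd <;>
    rcases he with he | he | he | he <;> rw [hu, hd, he] at hm ⊢ <;>
    revert hm <;> decide

lemma deriv_aux {k : ℤ} (hk : k % 4 = 1) :
    ∑ p ∈ liouvilleSet k, (if p.1 % 2 = 0 then sgn (p.1 / 2) * chi p.2.1 else 0) =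
    ∑ p ∈ liouvilleSet k, chi (p.2.2 - 2 * p.1) * chi (p.1 + p.2.1) *
      chi (2 * p.1 + 2 * p.2.1 - p.2.2) := by
  rw [← sub_eq_zero, ← Finset.sum_sub_distrib]
  refine Eq.trans (Finset.sum_congr rfl ?_) (sum_eq_zero_of_odd
    (fun p => if p.2.1 % 4 = 0 ∧ p.2.2 % 2 = 1 then chi p.1 else 0) k fun u d e => by
      simp only [chi_neg]; split_ifs <;> simp)
  rintro ⟨u, d, e⟩ h
  rw [deriv_term hk h]; ring

lemma deriv_F1 (x y z : ℤ) : chi (-x) * chi y * chi z = -(chi x * chi y * chi z) := by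
  rw [chi_neg]; ring

lemma deriv_F2 (x y z : ℤ) : chi x * chi (-y) * chi (-z) = chi x * chi y * chi z := by
  rw [chi_neg, chi_neg]; ring

lemma deriv_R (n : ℤ) : ∑ p ∈ liouvilleSet n, chi (p.2.1 + p.2.2) * chi p.1 *
    chi (p.2.1 - p.2.2) = 0 :=
  sum_eq_zero_of_odd (fun p => chi (p.2.1 + p.2.2) * chi p.1 * chi (p.2.1 - p.2.2)) n
    fun u d e => by simp only [chi_neg]; ring

lemma deriv_not_sq {k : ℤ} (hk : k % 4 = 1) (hn : ∀ l, k ≠ l ^ 2) :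
    ∑ p ∈ liouvilleSet k, (if p.1 % 2 = 0 then sgn (p.1 / 2) * chi p.2.1 else 0) = 0 := by
  have := liouville_not_sq (fun x y z => chi x * chi y * chi z) deriv_F1 deriv_F2 hn
  rw [← deriv_aux hk, deriv_R] at this
  omega

lemma deriv_sq {k l : ℤ} (hk : k % 4 = 1) (hl : 0 < l) (hn : k = l ^ 2) :
    ∑ p ∈ liouvilleSet k, (if p.1 % 2 = 0 then sgn (p.1 / 2) * chi p.2.1 else 0) =
      l * chi l := by
  have := liouville_sq (fun x y z => chi x * chi y * chi z) deriv_F1 deriv_F2 hl hn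
  rw [← deriv_aux hk, deriv_R] at this
  have e1 : ∑ j ∈ Finset.Icc 1 (2 * l - 1), chi j * chi l * chi j = l * chi l := by
    have := sum_Icc_odd (fun j => chi j * chi j) (fun l => l) (by decide) (fun l _ => by
      simp only [chi_two_mul, chi_two_mul_add_one, sgn_mul_self]; ring) l hl
    calc _ = chi l * ∑ j ∈ Finset.Icc 1 (2 * l - 1), chi j * chi j := by
          rw [Finset.mul_sum]; exact Finset.sum_congr rfl fun j _ => by ring
      _ = _ := by rw [this]; ring
  have e2 : ∑ j ∈ Finset.Ioo (-l) l, chi (2 * l) * chi j * chi (2 * j) = 0 :=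
    Finset.sum_eq_zero fun j _ => by rw [chi_two_mul]; ring
  rw [e1, e2] at this
  omega

/-! ### Sums of two and four squares -/

/-- The representations of `n` as a sum of two squares. The box only serves to make this a `Finset`;
see `mem_reps2`. -/
noncomputable def reps2 (n : ℤ) : Finset (ℤ × ℤ) :=
  (Finset.Icc (-n) n ×ˢ Finset.Icc (-n) n).filter fun p => p.1 ^ 2 + p.2 ^ 2 = n

/-- The representations of `n` as a sum of four squares; see `mem_reps4`. -/
noncomputable def reps4 (n : ℤ) : Finset (ℤ × ℤ × ℤ × ℤ) :=
  (Finset.Icc (-n) n ×ˢ Finset.Icc (-n) n ×ˢ Finset.Icc (-n) n ×ˢ Finset.Icc (-n) n).filter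
    fun p => p.1 ^ 2 + p.2.1 ^ 2 + p.2.2.1 ^ 2 + p.2.2.2 ^ 2 = n

/-- The pairs `(d, e)` of positive integers with `de = n`; see `mem_factors`. It is empty for `n ≤ 0`. -/
noncomputable def factors (n : ℤ) : Finset (ℤ × ℤ) :=
  (Finset.Icc (-n) n ×ˢ Finset.Icc (-n) n).filter fun p => p.1 * p.2 = n ∧ 0 < p.1 ∧ 0 < p.2

lemma mem_Icc_of_sq_le {n x : ℤ} (h : x ^ 2 ≤ n) : x ∈ Finset.Icc (-n) n := by
  rw [Finset.mem_Icc]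
  constructor <;> nlinarith [sq_nonneg (x - 1), sq_nonneg (x + 1)]

lemma mem_reps2 {n : ℤ} {p : ℤ × ℤ} : p ∈ reps2 n ↔ p.1 ^ 2 + p.2 ^ 2 = n := by
  simp only [reps2, Finset.mem_filter, Finset.mem_product]
  refine ⟨fun h => h.2, fun h => ⟨⟨?_, ?_⟩, h⟩⟩ <;> apply mem_Icc_of_sq_le <;> nlinarith

lemma mem_reps4 {n : ℤ} {p : ℤ × ℤ × ℤ × ℤ} :
    p ∈ reps4 n ↔ p.1 ^ 2 + p.2.1 ^ 2 + p.2.2.1 ^ 2 + p.2.2.2 ^ 2 = n := by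
  simp only [reps4, Finset.mem_filter, Finset.mem_product]
  refine ⟨fun h => h.2, fun h => ⟨⟨?_, ?_, ?_, ?_⟩, h⟩⟩ <;> apply mem_Icc_of_sq_le <;>
    linarith [sq_nonneg p.1, sq_nonneg p.2.1, sq_nonneg p.2.2.1, sq_nonneg p.2.2.2]

lemma mem_factors {n : ℤ} {p : ℤ × ℤ} :
    p ∈ factors n ↔ p.1 * p.2 = n ∧ 0 < p.1 ∧ 0 < p.2 := by
  simp only [factors, Finset.mem_filter, Finset.mem_product, Finset.mem_Icc]
  refine ⟨fun h => h.2, fun h => ⟨⟨⟨?_, ?_⟩, ?_, ?_⟩, h⟩⟩ <;> nlinarith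

/-- The recurrence `∑ (n - c u²) f(n - u²) = 0` determines `f`, because the term `u = 0` is `n f(n)`. -/
lemma rec_unique (c : ℤ) (f g : ℤ → ℤ) (h0 : f 0 = g 0) (hneg : ∀ n < 0, f n = g n)
    (hf : ∀ n > 0, ∑ u ∈ Finset.Icc (-n) n, (n - c * u ^ 2) * f (n - u ^ 2) = 0)
    (hg : ∀ n > 0, ∑ u ∈ Finset.Icc (-n) n, (n - c * u ^ 2) * g (n - u ^ 2) = 0)
    (n : ℤ) : f n = g n := by
  have key : ∀ N : ℕ, f N = g N := by
    intro N
    induction N using Nat.strong_induction_on with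
    | _ N ih =>
      rcases Nat.eq_zero_or_pos N with rfl | hN
      · exact_mod_cast h0
      · have hN' : (0 : ℤ) < N := by exact_mod_cast hN
        have e := (hf N hN').trans (hg N hN').symm
        rw [← sub_eq_zero, ← Finset.sum_sub_distrib,
          Finset.sum_eq_single_of_mem 0 (by simp)] at e
        · have : (N : ℤ) * (f N - g N) = 0 := by
            simp only [ne_eq, OfNat.ofNat_ne_zero, not_false_eq_true, zero_pow, sub_zero] at e
            linear_combination e
          rcases mul_eq_zero.1 this with h | h <;> omega
        · intro u _ hu
          have hu2 : 0 < u ^ 2 := by positivity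
          have : f (N - u ^ 2) = g (N - u ^ 2) := by
            rcases lt_or_ge ((N : ℤ) - u ^ 2) 0 with h | h
            · exact hneg _ h
            · obtain ⟨M, hM⟩ := Int.eq_ofNat_of_zero_le h
              rw [hM]; exact ih M (by omega)
          rw [this, sub_self]
  rcases lt_or_ge n 0 with h | h
  · exact hneg n h
  · obtain ⟨M, rfl⟩ := Int.eq_ofNat_of_zero_le h
    exact key M

/-- The sum is `∑ (n - 3u²)` over `u² + a² + b² = n`, which vanishes by symmetry in `u, a, b`. -/
lemma reps2_rec (n : ℤ) :
    ∑ u ∈ Finset.Icc (-n) n, (n - 3 * u ^ 2) * ((reps2 (n - u ^ 2)).card : ℤ) = 0 := by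
  let R : Finset (ℤ × ℤ × ℤ) := (Finset.Icc (-n) n ×ˢ Finset.Icc (-n) n ×ˢ Finset.Icc (-n) n).filter
    fun p => p.1 ^ 2 + p.2.1 ^ 2 + p.2.2 ^ 2 = n
  have hR : ∀ p, p ∈ R ↔ p.1 ^ 2 + p.2.1 ^ 2 + p.2.2 ^ 2 = n := by
    intro p
    simp only [R, Finset.mem_filter, Finset.mem_product]
    refine ⟨fun h => h.2, fun h => ⟨⟨?_, ?_, ?_⟩, h⟩⟩ <;> apply mem_Icc_of_sq_le <;>
      linarith [sq_nonneg p.1, sq_nonneg p.2.1, sq_nonneg p.2.2]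
  have e : ∑ u ∈ Finset.Icc (-n) n, (n - 3 * u ^ 2) * ((reps2 (n - u ^ 2)).card : ℤ) =
      ∑ p ∈ R, (n - 3 * p.1 ^ 2) := by
    rw [Finset.sum_finset_product R (Finset.Icc (-n) n) (fun u => reps2 (n - u ^ 2))]
    · refine Finset.sum_congr rfl fun u _ => ?_
      simp only [Finset.sum_const, nsmul_eq_mul, mul_comm]
    · rintro ⟨u, p⟩
      rw [hR, mem_reps2]
      refine ⟨fun h => ⟨mem_Icc_of_sq_le ?_, ?_⟩, fun h => ?_⟩
      · simp only at h ⊢; nlinarith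
      · simp only at h ⊢; omega
      · have := h.2; simp only at this ⊢; omega
  rw [e]
  have s1 : ∑ p ∈ R, p.1 ^ 2 = ∑ p ∈ R, p.2.1 ^ 2 := by
    refine Finset.sum_nbij' (fun p => (p.2.1, p.1, p.2.2)) (fun p => (p.2.1, p.1, p.2.2))
      ?_ ?_ ?_ ?_ ?_ <;> rintro ⟨u, d, e⟩ h <;> simp only [hR] at h ⊢ <;> omega
  have s2 : ∑ p ∈ R, p.1 ^ 2 = ∑ p ∈ R, p.2.2 ^ 2 := by
    refine Finset.sum_nbij' (fun p => (p.2.2, p.2.1, p.1)) (fun p => (p.2.2, p.2.1, p.1))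
      ?_ ?_ ?_ ?_ ?_ <;> rintro ⟨u, d, e⟩ h <;> simp only [hR] at h ⊢ <;> omega
  have : ∑ p ∈ R, (n - 3 * p.1 ^ 2) =
      ∑ p ∈ R, (p.1 ^ 2 + p.2.1 ^ 2 + p.2.2 ^ 2 - 3 * p.1 ^ 2) :=
    Finset.sum_congr rfl fun p hp => by rw [(hR p).1 hp]
  rw [this, Finset.sum_sub_distrib, Finset.sum_add_distrib, Finset.sum_add_distrib,
    ← Finset.mul_sum, ← s1, ← s2]
  ring

/-- The sum is `∑ (n - 5u²)` over the representations of `n` by five squares, which vanishes by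
symmetry. -/
lemma reps4_rec (n : ℤ) :
    ∑ u ∈ Finset.Icc (-n) n, (n - 5 * u ^ 2) * ((reps4 (n - u ^ 2)).card : ℤ) = 0 := by
  let R : Finset (ℤ × ℤ × ℤ × ℤ × ℤ) := (Finset.Icc (-n) n ×ˢ Finset.Icc (-n) n ×ˢ
    Finset.Icc (-n) n ×ˢ Finset.Icc (-n) n ×ˢ Finset.Icc (-n) n).filter
    fun p => p.1 ^ 2 + p.2.1 ^ 2 + p.2.2.1 ^ 2 + p.2.2.2.1 ^ 2 + p.2.2.2.2 ^ 2 = n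
  have hR : ∀ p, p ∈ R ↔
      p.1 ^ 2 + p.2.1 ^ 2 + p.2.2.1 ^ 2 + p.2.2.2.1 ^ 2 + p.2.2.2.2 ^ 2 = n := by
    intro p
    simp only [R, Finset.mem_filter, Finset.mem_product]
    refine ⟨fun h => h.2, fun h => ⟨⟨?_, ?_, ?_, ?_, ?_⟩, h⟩⟩ <;> apply mem_Icc_of_sq_le <;>
      linarith [sq_nonneg p.1, sq_nonneg p.2.1, sq_nonneg p.2.2.1, sq_nonneg p.2.2.2.1,
        sq_nonneg p.2.2.2.2]
  have e : ∑ u ∈ Finset.Icc (-n) n, (n - 5 * u ^ 2) * ((reps4 (n - u ^ 2)).card : ℤ) =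
      ∑ p ∈ R, (n - 5 * p.1 ^ 2) := by
    rw [Finset.sum_finset_product R (Finset.Icc (-n) n) (fun u => reps4 (n - u ^ 2))]
    · refine Finset.sum_congr rfl fun u _ => ?_
      simp only [Finset.sum_const, nsmul_eq_mul, mul_comm]
    · rintro ⟨u, p⟩
      rw [hR, mem_reps4]
      refine ⟨fun h => ⟨mem_Icc_of_sq_le ?_, ?_⟩, fun h => ?_⟩
      · simp only at h ⊢
        linarith [sq_nonneg p.1, sq_nonneg p.2.1, sq_nonneg p.2.2.1, sq_nonneg p.2.2.2]
      · simp only at h ⊢; omega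
      · have := h.2; simp only at this ⊢; omega
  rw [e]
  have s1 : ∑ p ∈ R, p.1 ^ 2 = ∑ p ∈ R, p.2.1 ^ 2 := by
    refine Finset.sum_nbij' (fun p => (p.2.1, p.1, p.2.2)) (fun p => (p.2.1, p.1, p.2.2))
      ?_ ?_ ?_ ?_ ?_ <;> rintro ⟨u, a, b, c, d⟩ h <;> simp only [hR] at h ⊢ <;> omega
  have s2 : ∑ p ∈ R, p.1 ^ 2 = ∑ p ∈ R, p.2.2.1 ^ 2 := by
    refine Finset.sum_nbij' (fun p => (p.2.2.1, p.2.1, p.1, p.2.2.2))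
      (fun p => (p.2.2.1, p.2.1, p.1, p.2.2.2))
      ?_ ?_ ?_ ?_ ?_ <;> rintro ⟨u, a, b, c, d⟩ h <;> simp only [hR] at h ⊢ <;> omega
  have s3 : ∑ p ∈ R, p.1 ^ 2 = ∑ p ∈ R, p.2.2.2.1 ^ 2 := by
    refine Finset.sum_nbij' (fun p => (p.2.2.2.1, p.2.1, p.2.2.1, p.1, p.2.2.2.2))
      (fun p => (p.2.2.2.1, p.2.1, p.2.2.1, p.1, p.2.2.2.2))
      ?_ ?_ ?_ ?_ ?_ <;> rintro ⟨u, a, b, c, d⟩ h <;> simp only [hR] at h ⊢ <;> omega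
  have s4 : ∑ p ∈ R, p.1 ^ 2 = ∑ p ∈ R, p.2.2.2.2 ^ 2 := by
    refine Finset.sum_nbij' (fun p => (p.2.2.2.2, p.2.1, p.2.2.1, p.2.2.2.1, p.1))
      (fun p => (p.2.2.2.2, p.2.1, p.2.2.1, p.2.2.2.1, p.1))
      ?_ ?_ ?_ ?_ ?_ <;> rintro ⟨u, a, b, c, d⟩ h <;> simp only [hR] at h ⊢ <;> omega
  have : ∑ p ∈ R, (n - 5 * p.1 ^ 2) =
      ∑ p ∈ R, (p.1 ^ 2 + p.2.1 ^ 2 + p.2.2.1 ^ 2 + p.2.2.2.1 ^ 2 + p.2.2.2.2 ^ 2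
        - 5 * p.1 ^ 2) :=
    Finset.sum_congr rfl fun p hp => by rw [(hR p).1 hp]
  rw [this, Finset.sum_sub_distrib, Finset.sum_add_distrib, Finset.sum_add_distrib,
    Finset.sum_add_distrib, Finset.sum_add_distrib,
    ← Finset.mul_sum, ← s1, ← s2, ← s3, ← s4]
  ring

lemma sum_factors (K : ℤ × ℤ × ℤ → ℤ) (n : ℤ) :
    ∑ u ∈ Finset.Icc (-n) n, ∑ q ∈ factors (n - u ^ 2), K (u, q) =
      ∑ p ∈ liouvilleSet n, K p := by
  rw [Finset.sum_finset_product (liouvilleSet n) (Finset.Icc (-n) n)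
    (fun u => factors (n - u ^ 2))]
  rintro ⟨u, d, e⟩
  rw [mem_liouvilleSet, mem_factors]
  simp only
  refine ⟨fun h => ⟨mem_Icc_of_sq_le ?_, ?_⟩, fun h => ?_⟩
  · nlinarith [mul_pos h.2.1 h.2.2]
  · grind
  · grind

lemma sum_sq_eq_zero {n : ℤ} (hn : ∀ l, n ≠ l ^ 2) (f : ℤ → ℤ) :
    ∑ u ∈ Finset.Icc (-n) n, f u * (if n - u ^ 2 = 0 then 1 else 0) = 0 :=
  Finset.sum_eq_zero fun u _ => by
    rw [if_neg fun h => hn u (by omega), mul_zero]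

lemma sum_sq_eq {n l : ℤ} (hl : 0 < l) (hn : n = l ^ 2) (f : ℤ → ℤ) :
    ∑ u ∈ Finset.Icc (-n) n, f u * (if n - u ^ 2 = 0 then 1 else 0) = f l + f (-l) := by
  have hsub : ({l, -l} : Finset ℤ) ⊆ Finset.Icc (-n) n := by
    intro u hu
    simp only [Finset.mem_insert, Finset.mem_singleton] at hu
    apply mem_Icc_of_sq_le
    rcases hu with rfl | rfl <;> grind
  rw [← Finset.sum_subset hsub, Finset.sum_pair (by omega)]
  · simp [hn]
  · intro u _ hu
    simp only [Finset.mem_insert, Finset.mem_singleton, not_or] at hu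
    rw [if_neg, mul_zero]
    intro h
    rcases sq_eq_sq_iff_eq_or_eq_neg.1 (show u ^ 2 = l ^ 2 by omega) with h | h <;> grind

lemma factors_of_nonpos {n : ℤ} (hn : n ≤ 0) : factors n = ∅ := by
  refine Finset.eq_empty_of_forall_notMem fun p hp => ?_
  rw [mem_factors] at hp
  nlinarith [mul_pos hp.2.1 hp.2.2]

lemma pos_sq_or (n : ℤ) (hn : 0 < n) : (∀ l, n ≠ l ^ 2) ∨ ∃ l, 0 < l ∧ n = l ^ 2 := by
  by_cases h : ∀ l, n ≠ l ^ 2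
  · exact Or.inl h
  · push Not at h
    obtain ⟨l, hl⟩ := h
    refine Or.inr ⟨|l|, abs_pos.2 ?_, by rw [sq_abs, hl]⟩
    rintro rfl; simp at hl; omega

/-- Jacobi's two-square theorem, including the values at `n ≤ 0`. -/
theorem card_reps2 (n : ℤ) : ((reps2 n).card : ℤ) =
    (if n = 0 then 1 else 0) + 4 * ∑ p ∈ factors n, chi p.2 := by
  refine rec_unique 3 (fun n => ((reps2 n).card : ℤ)) (fun n =>
    (if n = 0 then 1 else 0) + 4 * ∑ p ∈ factors n, chi p.2) ?_ ?_ (fun n _ => reps2_rec n) ?_ n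
  · rfl
  · intro n hn
    have : reps2 n = ∅ := Finset.eq_empty_of_forall_notMem fun p hp => by
      rw [mem_reps2] at hp; nlinarith
    simp [this, factors_of_nonpos hn.le, hn.ne]
  · intro n hn
    have e : ∑ u ∈ Finset.Icc (-n) n, (n - 3 * u ^ 2) *
        ((if n - u ^ 2 = 0 then 1 else 0) + 4 * ∑ p ∈ factors (n - u ^ 2), chi p.2) =
        ∑ u ∈ Finset.Icc (-n) n, (n - 3 * u ^ 2) * (if n - u ^ 2 = 0 then 1 else 0) +
        4 * ∑ p ∈ liouvilleSet n, chi p.2.2 * (p.2.1 * p.2.2 - 2 * p.1 ^ 2) := by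
      rw [← sum_factors, Finset.mul_sum, ← Finset.sum_add_distrib]
      refine Finset.sum_congr rfl fun u _ => ?_
      rw [mul_add, mul_left_comm, Finset.mul_sum]
      congr 2
      refine Finset.sum_congr rfl fun p hp => ?_
      have := (mem_factors.1 hp).1
      simp only
      rw [this]; ring
    rw [e]
    rcases pos_sq_or n hn with h | ⟨l, hl, h⟩
    · rw [sum_sq_eq_zero h, two_rec_not_sq h]; rfl
    · rw [sum_sq_eq hl h, two_rec_sq hl h, h]; ring

/-- Jacobi's four-square theorem, including the values at `n ≤ 0`. -/
theorem card_reps4 (n : ℤ) : ((reps4 n).card : ℤ) =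
    (if n = 0 then 1 else 0) + 8 * ∑ p ∈ factors n, wt p.1 p.2 * p.1 := by
  refine rec_unique 5 (fun n => ((reps4 n).card : ℤ)) (fun n =>
    (if n = 0 then 1 else 0) + 8 * ∑ p ∈ factors n, wt p.1 p.2 * p.1)
    ?_ ?_ (fun n _ => reps4_rec n) ?_ n
  · rfl
  · intro n hn
    have : reps4 n = ∅ := Finset.eq_empty_of_forall_notMem fun p hp => by
      rw [mem_reps4] at hp
      linarith [sq_nonneg p.1, sq_nonneg p.2.1, sq_nonneg p.2.2.1, sq_nonneg p.2.2.2]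
    simp [this, factors_of_nonpos hn.le, hn.ne]
  · intro n hn
    have e : ∑ u ∈ Finset.Icc (-n) n, (n - 5 * u ^ 2) *
        ((if n - u ^ 2 = 0 then 1 else 0) + 8 * ∑ p ∈ factors (n - u ^ 2), wt p.1 p.2 * p.1) =
        ∑ u ∈ Finset.Icc (-n) n, (n - 5 * u ^ 2) * (if n - u ^ 2 = 0 then 1 else 0) +
        8 * ∑ p ∈ liouvilleSet n,
          wt p.2.1 p.2.2 * (p.2.1 * (p.2.1 * p.2.2 - 4 * p.1 ^ 2)) := by
      rw [← sum_factors, Finset.mul_sum, ← Finset.sum_add_distrib]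
      refine Finset.sum_congr rfl fun u _ => ?_
      rw [mul_add, mul_left_comm, Finset.mul_sum]
      congr 2
      refine Finset.sum_congr rfl fun p hp => ?_
      have := (mem_factors.1 hp).1
      simp only
      rw [this]; ring
    rw [e]
    rcases pos_sq_or n hn with h | ⟨l, hl, h⟩
    · rw [sum_sq_eq_zero h, four_rec_not_sq h]; rfl
    · rw [sum_sq_eq hl h, four_rec_sq hl h, h]; ring

theorem card_reps4_odd (m : ℕ) (hm : m % 2 = 1) :
    ((reps4 m).card : ℤ) = 8 * ∑ d ∈ m.divisors, (d : ℤ) := by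
  rw [card_reps4, if_neg (by omega), zero_add]
  congr 1
  refine Finset.sum_nbij' (fun p => p.1.toNat) (fun d => ((d : ℤ), ((m / d : ℕ) : ℤ)))
    ?_ ?_ ?_ ?_ ?_
  · rintro ⟨d, e⟩ h
    rw [mem_factors] at h
    simp only at h
    rw [Nat.mem_divisors]
    refine ⟨?_, by omega⟩
    zify
    rw [Int.toNat_of_nonneg h.2.1.le]
    exact ⟨e, h.1.symm⟩
  · intro d hd
    have hd' := Nat.mem_divisors.1 hd
    have := Nat.pos_of_mem_divisors hd
    rw [mem_factors]
    simp only
    refine ⟨by exact_mod_cast Nat.mul_div_cancel' hd'.1, by exact_mod_cast this, ?_⟩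
    exact_mod_cast Nat.div_pos (Nat.le_of_dvd (by omega) hd'.1) this
  · rintro ⟨d, e⟩ h
    rw [mem_factors] at h
    simp only at h
    obtain ⟨h1, h2, h3⟩ := h
    lift d to ℕ using h2.le
    lift e to ℕ using h3.le
    have : m = d * e := by exact_mod_cast h1.symm
    simp only [Int.toNat_natCast, this]
    rw [Nat.mul_div_cancel_left _ (by omega)]
  · intro d _
    simp
  · rintro ⟨d, e⟩ h
    rw [mem_factors] at h
    simp only at h
    have : wt d e = 1 := by
      unfold wt
      rw [if_neg]
      rintro ⟨h1, -⟩
      have : (d * e) % 2 = 0 := by rw [Int.mul_emod, h1]; simp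
      omega
    simp only [this, one_mul]
    omega

/-! ### Jacobi's derivative formula and the signed count -/

lemma sum_factors_swap (k : ℤ) : ∑ p ∈ factors k, chi p.2 = ∑ p ∈ factors k, chi p.1 := by
  refine Finset.sum_nbij' Prod.swap Prod.swap ?_ ?_ ?_ ?_ ?_ <;> rintro ⟨d, e⟩ h <;>
    simp_all [mem_factors, mul_comm]

/-- The sum of the square roots `r ≡ 1 (mod 4)` of `k`, of which there is at most one; the bound `m`
must be at least `k`. -/
noncomputable def rootSum (m k : ℤ) : ℤ :=
  ∑ r ∈ Finset.Icc (-m) m, if r % 4 = 1 ∧ r ^ 2 = k then r else 0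

lemma rootSum_not_sq {m k : ℤ} (hk : ∀ l, k ≠ l ^ 2) : rootSum m k = 0 :=
  Finset.sum_eq_zero fun r _ => if_neg fun h => hk r h.2.symm

lemma rootSum_sq {m k l : ℤ} (hkm : k ≤ m) (hk : k % 4 = 1) (hl : 0 < l) (h : k = l ^ 2) :
    rootSum m k = l * chi l := by
  have hodd : l % 2 = 1 := by
    rcases Int.emod_two_eq l with h' | h'
    · have : (l ^ 2) % 2 = 0 := by simp [pow_two, Int.mul_emod, h']
      omega
    · exact h'
  have key : ∀ r : ℤ, r % 4 = 1 → r ^ 2 = k → r = l * chi l := by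
    intro r h1 h2
    rcases sq_eq_sq_iff_eq_or_eq_neg.1 (h2.trans h) with h3 | h3 <;> unfold chi <;>
      split_ifs <;> omega
  have hs : (l * chi l) ^ 2 = k := by
    rw [h]; unfold chi; split_ifs <;> first | omega | ring
  have h4 : (l * chi l) % 4 = 1 := by
    unfold chi; split_ifs <;> omega
  rw [rootSum, Finset.sum_eq_single_of_mem (l * chi l) (mem_Icc_of_sq_le (hs.trans_le hkm)),
    if_pos ⟨h4, hs⟩]
  intro r _ hr
  exact if_neg fun h => hr (key r h.1 h.2)

/-- Coefficient form of Jacobi's derivative formula: the sum of `(-1)^t` over `k = a² + b² + 4t²`. The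
two-square theorem turns the left-hand side into a sum over `k = (2t)² + de`. -/
theorem jacobi_derivative {m k : ℤ} (hkm : k ≤ m) (hk : k % 4 = 1) :
    ∑ t ∈ Finset.Icc (-m) m, sgn t * ((reps2 (k - 4 * t ^ 2)).card : ℤ) = 4 * rootSum m k := by
  have e1 : ∑ t ∈ Finset.Icc (-m) m, sgn t * ((reps2 (k - 4 * t ^ 2)).card : ℤ) =
      4 * ∑ p ∈ (liouvilleSet k).filter (fun p => p.1 % 2 = 0), sgn (p.1 / 2) * chi p.2.1 := by
    have e2 : ∑ t ∈ Finset.Icc (-m) m, ∑ q ∈ factors (k - 4 * t ^ 2), sgn t * chi q.1 =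
        ∑ p ∈ (liouvilleSet k).filter (fun p => p.1 % 2 = 0), sgn (p.1 / 2) * chi p.2.1 := by
      rw [Finset.sum_sigma']
      refine Finset.sum_bij' (fun p _ => (2 * p.1, p.2)) (fun p _ => ⟨p.1 / 2, p.2⟩)
        ?_ ?_ ?_ ?_ ?_
      · rintro ⟨t, d, e⟩ h
        simp only [Finset.mem_sigma, mem_factors, Finset.mem_filter, mem_liouvilleSet] at h ⊢
        refine ⟨⟨?_, h.2.2⟩, by omega⟩
        linear_combination h.2.1
      · rintro ⟨u, d, e⟩ h
        simp only [Finset.mem_sigma, mem_factors, Finset.mem_filter, mem_liouvilleSet] at h ⊢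
        obtain ⟨⟨h1, h2, h3⟩, h4⟩ := h
        obtain ⟨t, rfl⟩ := Int.dvd_of_emod_eq_zero h4
        rw [Int.mul_ediv_cancel_left _ (by norm_num)]
        refine ⟨mem_Icc_of_sq_le ?_, ?_, h2, h3⟩
        · nlinarith [mul_pos h2 h3]
        · linear_combination h1
      · rintro ⟨t, d, e⟩ h
        simp
      · rintro ⟨u, d, e⟩ h
        simp only [Finset.mem_filter] at h
        simp only [Prod.mk.injEq, and_true]
        omega
      · rintro ⟨t, d, e⟩ h
        simp
    rw [← e2, Finset.mul_sum]
    refine Finset.sum_congr rfl fun t _ => ?_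
    rw [card_reps2, if_neg (by omega), zero_add, sum_factors_swap, ← Finset.mul_sum]
    ring
  rw [e1, Finset.sum_filter]
  congr 1
  by_cases h : ∀ l, k ≠ l ^ 2
  · rw [deriv_not_sq hk h, rootSum_not_sq h]
  · push Not at h
    obtain ⟨l, hl⟩ := h
    have hl0 : l ≠ 0 := by rintro rfl; omega
    have hl' : k = |l| ^ 2 := by rw [sq_abs, hl]
    rw [deriv_sq hk (abs_pos.2 hl0) hl', rootSum_sq hkm hk (abs_pos.2 hl0) hl']

lemma sq_emod_four (a : ℤ) : a ^ 2 % 4 = a % 2 := by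
  rcases Int.even_or_odd' a with ⟨b, rfl | rfl⟩
  · ring_nf; omega
  · ring_nf; omega

/-- For `m ≡ 1 (mod 4)` and `a + b` odd, `c = 2s` and `d = 2t` are even and the sign is
`(-1)^(s-t) = (-1)^s (-1)^t`; the sum over `a, b, t` is `jacobi_derivative`. -/
theorem signed_count {m : ℤ} (hm : m % 4 = 1) :
    ∑ p ∈ (reps4 m).filter (fun p => (p.1 + p.2.1) % 2 = 1), sgn ((p.2.2.1 - p.2.2.2) / 2) =
      4 * ∑ s ∈ Finset.Icc (-m) m, sgn s * rootSum m (m - 4 * s ^ 2) := by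
  have e1 : ∑ s ∈ Finset.Icc (-m) m, ∑ t ∈ Finset.Icc (-m) m,
      ∑ q ∈ reps2 (m - 4 * s ^ 2 - 4 * t ^ 2), sgn s * sgn t =
      ∑ p ∈ (reps4 m).filter (fun p => (p.1 + p.2.1) % 2 = 1),
        sgn ((p.2.2.1 - p.2.2.2) / 2) := by
    simp_rw [Finset.sum_sigma']
    refine Finset.sum_bij' (fun p _ => (p.2.2.1, p.2.2.2, 2 * p.1, 2 * p.2.1))
      (fun p _ => ⟨p.2.2.1 / 2, p.2.2.2 / 2, p.1, p.2.1⟩) ?_ ?_ ?_ ?_ ?_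
    · rintro ⟨s, t, a, b⟩ h
      simp only [Finset.mem_sigma, mem_reps2, Finset.mem_filter, mem_reps4] at h ⊢
      have h3 := h.2.2
      have := sq_emod_four a
      have := sq_emod_four b
      refine ⟨by linear_combination h3, by omega⟩
    · rintro ⟨a, b, c, d⟩ h
      simp only [Finset.mem_sigma, mem_reps2, Finset.mem_filter, mem_reps4] at h ⊢
      have := sq_emod_four a
      have := sq_emod_four b
      have := sq_emod_four c
      have := sq_emod_four d
      obtain ⟨h1, h2⟩ := h
      obtain ⟨s, rfl⟩ : (2 : ℤ) ∣ c := by omega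
      obtain ⟨t, rfl⟩ : (2 : ℤ) ∣ d := by omega
      simp only [ne_eq, OfNat.ofNat_ne_zero, not_false_eq_true, Int.mul_ediv_cancel_left]
      refine ⟨mem_Icc_of_sq_le ?_, mem_Icc_of_sq_le ?_, ?_⟩
      · nlinarith
      · nlinarith
      · linear_combination h1
    · rintro ⟨s, t, a, b⟩ h
      simp
    · rintro ⟨a, b, c, d⟩ h
      simp only [Finset.mem_filter, mem_reps4] at h
      have := sq_emod_four a
      have := sq_emod_four b
      have := sq_emod_four c
      have := sq_emod_four d
      simp only [Prod.mk.injEq, true_and]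
      omega
    · rintro ⟨s, t, a, b⟩ h
      show sgn s * sgn t = sgn ((2 * s - 2 * t) / 2)
      unfold sgn
      split_ifs <;> omega
  rw [← e1, Finset.mul_sum]
  refine Finset.sum_congr rfl fun s _ => ?_
  rw [mul_left_comm, ← jacobi_derivative (by nlinarith) (by omega), Finset.mul_sum]
  refine Finset.sum_congr rfl fun t _ => ?_
  rw [Finset.sum_const, nsmul_eq_mul]
  ring

/-- If `m = r² + 4s²` with `r = 4q + 1`, then `(m - 1)/4 = 4q² + 2q + s²` has the parity of `s`. -/
lemma sgn_of_rep {m r s : ℤ} (hr : r % 4 = 1) (h : m = r ^ 2 + 4 * s ^ 2) :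
    sgn s = sgn ((m - 1) / 4) := by
  obtain ⟨q, rfl⟩ : ∃ q, r = 4 * q + 1 := ⟨r / 4, by omega⟩
  have h1 : (m - 1) / 4 = 2 * (2 * q ^ 2 + q) + s ^ 2 := by
    have : m - 1 = 4 * (2 * (2 * q ^ 2 + q) + s ^ 2) := by rw [h]; ring
    rw [this, Int.mul_ediv_cancel_left _ (by norm_num)]
  have h2 := sq_emod_four s
  rw [h1]
  unfold sgn
  split_ifs <;> omega

theorem signed_count' {m : ℤ} (hm : m % 4 = 1) :
    ∑ p ∈ (reps4 m).filter (fun p => (p.1 + p.2.1) % 2 = 1), sgn ((p.2.2.1 - p.2.2.2) / 2) =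
      4 * sgn ((m - 1) / 4) * ∑ r ∈ Finset.Icc (-m) m, ∑ s ∈ Finset.Icc (-m) m,
        if r % 4 = 1 ∧ m = r ^ 2 + 4 * s ^ 2 then r else 0 := by
  rw [signed_count hm, mul_assoc]
  congr 1
  rw [Finset.sum_comm, Finset.mul_sum]
  refine Finset.sum_congr rfl fun s _ => ?_
  rw [rootSum, Finset.mul_sum, Finset.mul_sum]
  refine Finset.sum_congr rfl fun r _ => ?_
  by_cases h : r % 4 = 1 ∧ m = r ^ 2 + 4 * s ^ 2
  · rw [if_pos h, if_pos ⟨h.1, by omega⟩, sgn_of_rep h.1 h.2]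
  · rw [if_neg h, if_neg fun h' => h ⟨h'.1, by omega⟩]; simp

lemma finsum_eq (m : ℤ) :
    ∑ᶠ (r : ℤ) (s : ℤ) (_ : r % 4 = 1 ∧ m = r ^ 2 + 4 * s ^ 2), r =
      ∑ r ∈ Finset.Icc (-m) m, ∑ s ∈ Finset.Icc (-m) m,
        if r % 4 = 1 ∧ m = r ^ 2 + 4 * s ^ 2 then r else 0 := by
  simp_rw [finsum_eq_if]
  have h1 : ∀ r : ℤ, ∑ᶠ s : ℤ, (if r % 4 = 1 ∧ m = r ^ 2 + 4 * s ^ 2 then r else 0) =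
      ∑ s ∈ Finset.Icc (-m) m, if r % 4 = 1 ∧ m = r ^ 2 + 4 * s ^ 2 then r else 0 := by
    intro r
    apply finsum_eq_sum_of_support_subset
    intro s hs
    simp only [Function.mem_support, ne_eq, ite_eq_right_iff, not_forall] at hs
    obtain ⟨⟨-, h⟩, -⟩ := hs
    exact mem_Icc_of_sq_le (by nlinarith)
  simp_rw [h1]
  apply finsum_eq_sum_of_support_subset
  intro r hr
  obtain ⟨s, -, hs⟩ := Finset.exists_ne_zero_of_sum_ne_zero (Function.mem_support.1 hr)
  simp only [ne_eq, ite_eq_right_iff, not_forall] at hs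
  obtain ⟨⟨-, h⟩, -⟩ := hs
  exact mem_Icc_of_sq_le (by nlinarith)

/-! ### Counting the representations with prescribed residues -/

/-- Exactly one of `a + b`, `c + d` is odd, so half of the representations have `a + b` odd. -/
lemma card_half {m : ℕ} (hm : m % 2 = 1) :
    (((reps4 m).filter (fun p => (p.1 + p.2.1) % 2 = 1)).card : ℤ) =
      4 * ∑ d ∈ m.divisors, (d : ℤ) := by
  have h1 : ((reps4 m).filter (fun p => (p.1 + p.2.1) % 2 = 1)).card =
      ((reps4 m).filter (fun p => ¬ (p.1 + p.2.1) % 2 = 1)).card := by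
    refine Finset.card_nbij' (fun p => (p.2.2.1, p.2.2.2, p.1, p.2.1))
      (fun p => (p.2.2.1, p.2.2.2, p.1, p.2.1)) ?_ ?_ ?_ ?_
    · rintro ⟨a, b, c, d⟩ h
      simp only [Finset.coe_filter, Set.mem_ofPred_eq, mem_reps4] at h ⊢
      have := sq_emod_four a
      have := sq_emod_four b
      have := sq_emod_four c
      have := sq_emod_four d
      omega
    · rintro ⟨a, b, c, d⟩ h
      simp only [Finset.coe_filter, Set.mem_ofPred_eq, mem_reps4] at h ⊢
      have := sq_emod_four a
      have := sq_emod_four b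
      have := sq_emod_four c
      have := sq_emod_four d
      omega
    · rintro ⟨a, b, c, d⟩ h
      rfl
    · rintro ⟨a, b, c, d⟩ h
      rfl
  have h2 := Finset.card_filter_add_card_filter_not (s := reps4 m)
    (fun p => (p.1 + p.2.1) % 2 = 1)
  have h3 := card_reps4_odd m hm
  omega

/-- The representations `m = a² + b² + c² + d²` with `a + b` odd and `c - d ≡ 2 (mod 4)`. -/
noncomputable def quads (m : ℤ) : Finset (ℤ × ℤ × ℤ × ℤ) :=
  (reps4 m).filter fun p => (p.1 + p.2.1) % 2 = 1 ∧ (p.2.2.1 - p.2.2.2) % 4 = 2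

/-- Here `c` and `d` are odd, and `c ↦ -c` exchanges the classes 0 and 2 of `c - d` modulo 4. -/
lemma card_quads_three {m : ℕ} (hm : m % 4 = 3) :
    ((quads m).card : ℤ) = 2 * ∑ d ∈ m.divisors, (d : ℤ) := by
  have h1 : (quads m).card = ((reps4 m).filter
      (fun p => (p.1 + p.2.1) % 2 = 1 ∧ ¬ (p.2.2.1 - p.2.2.2) % 4 = 2)).card := by
    refine Finset.card_nbij' (fun p => (p.1, p.2.1, -p.2.2.1, p.2.2.2))
      (fun p => (p.1, p.2.1, -p.2.2.1, p.2.2.2)) ?_ ?_ ?_ ?_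
    · rintro ⟨a, b, c, d⟩ h
      simp only [quads, Finset.coe_filter, Set.mem_ofPred_eq, mem_reps4, neg_sq] at h ⊢
      have := sq_emod_four a
      have := sq_emod_four b
      have := sq_emod_four c
      have := sq_emod_four d
      omega
    · rintro ⟨a, b, c, d⟩ h
      simp only [quads, Finset.coe_filter, Set.mem_ofPred_eq, mem_reps4, neg_sq] at h ⊢
      have := sq_emod_four a
      have := sq_emod_four b
      have := sq_emod_four c
      have := sq_emod_four d
      omega
    · rintro ⟨a, b, c, d⟩ h
      simp
    · rintro ⟨a, b, c, d⟩ h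
      simp
  have h2 := Finset.card_filter_add_card_filter_not
    (s := (reps4 m).filter (fun p => (p.1 + p.2.1) % 2 = 1))
    (fun p => (p.2.2.1 - p.2.2.2) % 4 = 2)
  rw [Finset.filter_filter, Finset.filter_filter] at h2
  have h3 := card_half (m := m) (by omega)
  rw [← h1] at h2
  change (quads m).card + _ = _ at h2
  omega

/-- Here `c` and `d` are even, and twice the indicator of `c - d ≡ 2 (mod 4)` is `1 - (-1)^((c-d)/2)`. -/
lemma two_mul_card_quads_one {m : ℕ} (hm : m % 4 = 1) :
    2 * ((quads m).card : ℤ) = 4 * ∑ d ∈ m.divisors, (d : ℤ) -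
      ∑ p ∈ (reps4 m).filter (fun p => (p.1 + p.2.1) % 2 = 1),
        sgn ((p.2.2.1 - p.2.2.2) / 2) := by
  have h3 := card_half (m := m) (by omega)
  have h4 : ((quads m).card : ℤ) = ∑ p ∈ (reps4 m).filter (fun p => (p.1 + p.2.1) % 2 = 1),
      if (p.2.2.1 - p.2.2.2) % 4 = 2 then 1 else 0 := by
    rw [quads, ← Finset.filter_filter, Finset.card_filter]
    push_cast
    rfl
  rw [← h3, h4, Finset.card_eq_sum_ones]
  push_cast
  rw [Finset.mul_sum, ← Finset.sum_sub_distrib]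
  refine Finset.sum_congr rfl ?_
  rintro ⟨a, b, c, d⟩ h
  simp only [Finset.mem_filter, mem_reps4] at h
  have := sq_emod_four a
  have := sq_emod_four b
  have := sq_emod_four c
  have := sq_emod_four d
  simp only [sgn]
  split_ifs <;> omega

/-! ### From triangular numbers to squares -/

lemma two_mul_half (x : ℤ) : 2 * (x * (x - 1) / 2) = x * (x - 1) :=
  Int.mul_ediv_cancel' (Int.even_mul_pred_self x).two_dvd

/-- The solutions counted by `tquad 1 1 2 8 n`, with denominators cleared; see `mem_triReps`. -/
noncomputable def triReps (n : ℤ) : Finset (ℤ × ℤ × ℤ × ℤ) :=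
  (Finset.Icc (-(2 * n)) (2 * n + 1) ×ˢ Finset.Icc (-(2 * n)) (2 * n + 1) ×ˢ
    Finset.Icc (-(2 * n)) (2 * n + 1) ×ˢ Finset.Icc (-(2 * n)) (2 * n + 1)).filter fun p =>
    p.1 * (p.1 - 1) + p.2.1 * (p.2.1 - 1) + 2 * (p.2.2.1 * (p.2.2.1 - 1)) +
      8 * (p.2.2.2 * (p.2.2.2 - 1)) = 2 * n

lemma mul_pred_nonneg (x : ℤ) : 0 ≤ x * (x - 1) := by
  rcases le_or_gt x 0 with h | h <;> nlinarith

lemma mem_Icc_of_mul_pred_le {n x : ℤ} (h : x * (x - 1) ≤ 2 * n) :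
    x ∈ Finset.Icc (-(2 * n)) (2 * n + 1) := by
  rw [Finset.mem_Icc]
  rcases le_or_gt x 0 with h0 | h0
  · constructor <;> nlinarith
  · constructor <;> nlinarith [sq_nonneg (x - 1)]

lemma mem_triReps {n : ℤ} {p : ℤ × ℤ × ℤ × ℤ} : p ∈ triReps n ↔
    p.1 * (p.1 - 1) + p.2.1 * (p.2.1 - 1) + 2 * (p.2.2.1 * (p.2.2.1 - 1)) +
      8 * (p.2.2.2 * (p.2.2.2 - 1)) = 2 * n := by
  simp only [triReps, Finset.mem_filter, Finset.mem_product]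
  refine ⟨fun h => h.2, fun h => ⟨⟨?_, ?_, ?_, ?_⟩, h⟩⟩ <;> apply mem_Icc_of_mul_pred_le <;>
    linarith [mul_pred_nonneg p.1, mul_pred_nonneg p.2.1, mul_pred_nonneg p.2.2.1,
      mul_pred_nonneg p.2.2.2]

lemma tquad_eq_card (n : ℕ) : tquad 1 1 2 8 n = (triReps n).card := by
  refine Nat.subtype_card _ fun p => ?_
  have := two_mul_half p.1
  have := two_mul_half p.2.1
  have := two_mul_half p.2.2.1
  have := two_mul_half p.2.2.2
  rw [mem_triReps]
  push_cast
  constructor <;> intro h <;> linarith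

/-- The solutions with `x - y` even, up to a linear change of variables. -/
lemma card_even_diff (n : ℤ) :
    ((triReps n).filter (fun p => (p.1 - p.2.1) % 2 = 0)).card = (quads (2 * n + 3)).card := by
  refine Finset.card_nbij'
    (fun p => ((p.1 + p.2.1) / 2 + p.2.2.1 - 1, (p.1 + p.2.1) / 2 - p.2.2.1,
      (p.1 - p.2.1) / 2 + 2 * p.2.2.2 - 1, (p.1 - p.2.1) / 2 - 2 * p.2.2.2 + 1))
    (fun q => ((q.1 + q.2.1 + 1 + q.2.2.1 + q.2.2.2) / 2,
      (q.1 + q.2.1 + 1 - q.2.2.1 - q.2.2.2) / 2, (q.1 - q.2.1 + 1) / 2,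
      (q.2.2.1 - q.2.2.2 + 2) / 4)) ?_ ?_ ?_ ?_
  · rintro ⟨x, y, z, w⟩ h
    simp only [quads, Finset.coe_filter, Set.mem_ofPred_eq, mem_reps4, mem_triReps] at h ⊢
    obtain ⟨h1, h2⟩ := h
    obtain ⟨v, hv⟩ := Int.dvd_of_emod_eq_zero h2
    obtain rfl : x = y + 2 * v := by omega
    have e1 : (y + 2 * v + y) / 2 = y + v := by omega
    have e2 : (y + 2 * v - y) / 2 = v := by omega
    rw [e1, e2]
    refine ⟨by linear_combination h1, by omega, by omega⟩
  · rintro ⟨a, b, c, d⟩ h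
    simp only [quads, Finset.coe_filter, Set.mem_ofPred_eq, mem_reps4, mem_triReps] at h ⊢
    obtain ⟨h1, h2, h3⟩ := h
    obtain ⟨w, rfl⟩ : ∃ w, c = d + 4 * w - 2 := ⟨(c - d + 2) / 4, by omega⟩
    obtain ⟨z, rfl⟩ : ∃ z, a = b + 2 * z - 1 := ⟨(a - b + 1) / 2, by omega⟩
    have e1 : (b + 2 * z - 1 + b + 1 + (d + 4 * w - 2) + d) / 2 = b + z + d + 2 * w - 1 := by
      omega
    have e2 : (b + 2 * z - 1 + b + 1 - (d + 4 * w - 2) - d) / 2 = b + z - d - 2 * w + 1 := by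
      omega
    have e3 : (b + 2 * z - 1 - b + 1) / 2 = z := by omega
    have e4 : (d + 4 * w - 2 - d + 2) / 4 = w := by omega
    rw [e1, e2, e3, e4]
    refine ⟨by linear_combination h1, by omega⟩
  · rintro ⟨x, y, z, w⟩ h
    simp only [Finset.coe_filter, Set.mem_ofPred_eq] at h
    simp only [Prod.mk.injEq]
    omega
  · rintro ⟨a, b, c, d⟩ h
    simp only [quads, Finset.coe_filter, Set.mem_ofPred_eq, mem_reps4] at h
    simp only [Prod.mk.injEq]
    omega

/-- The involution `y ↦ 1 - y` exchanges the solutions with `x - y` even and odd. -/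
lemma card_triReps (n : ℤ) : (triReps n).card = 2 * (quads (2 * n + 3)).card := by
  have h1 : ((triReps n).filter (fun p => (p.1 - p.2.1) % 2 = 0)).card =
      ((triReps n).filter (fun p => ¬ (p.1 - p.2.1) % 2 = 0)).card := by
    refine Finset.card_nbij' (fun p => (p.1, 1 - p.2.1, p.2.2)) (fun p => (p.1, 1 - p.2.1, p.2.2))
      ?_ ?_ ?_ ?_
    · rintro ⟨x, y, z, w⟩ h
      simp only [Finset.coe_filter, Set.mem_ofPred_eq, mem_triReps] at h ⊢
      exact ⟨by linear_combination h.1, by omega⟩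
    · rintro ⟨x, y, z, w⟩ h
      simp only [Finset.coe_filter, Set.mem_ofPred_eq, mem_triReps] at h ⊢
      exact ⟨by linear_combination h.1, by omega⟩
    · rintro ⟨x, y, z, w⟩ h
      simp
    · rintro ⟨x, y, z, w⟩ h
      simp
  have h2 := Finset.card_filter_add_card_filter_not (s := triReps n)
    (fun p => (p.1 - p.2.1) % 2 = 0)
  rw [← h1, card_even_diff] at h2
  omega

lemma sgn_half_succ (n : ℕ) (hn : n % 2 = 1) : sgn (((n : ℤ) + 1) / 2) = -(-1) ^ ((n - 1) / 2) := by
  obtain ⟨k, rfl⟩ : ∃ k, n = 2 * k + 1 := ⟨n / 2, by omega⟩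
  have e1 : (((2 * k + 1 : ℕ) : ℤ) + 1) / 2 = k + 1 := by push_cast; omega
  have e2 : (2 * k + 1 - 1) / 2 = k := by omega
  rw [e1, e2]
  unfold sgn
  rcases Nat.even_or_odd k with h | h
  · rw [h.neg_one_pow]
    have := Nat.even_iff.1 h
    split_ifs <;> omega
  · rw [h.neg_one_pow]
    have := Nat.odd_iff.1 h
    split_ifs <;> omega

end Quat

theorem stmt_4 (n : ℕ) (hn : 0 < n) :
    (Even n → (tquad 1 1 2 8 n : ℤ) = 4 * ∑ d ∈ (2 * n + 3).divisors, (d : ℤ)) ∧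
    (Odd n → (tquad 1 1 2 8 n : ℤ) =
      4 * ∑ d ∈ (2 * n + 3).divisors, (d : ℤ) +
        4 * (-1 : ℤ) ^ ((n - 1) / 2) *
          ∑ᶠ (r : ℤ) (s : ℤ) (_ : r % 4 = 1 ∧ (2 * (n : ℤ) + 3) = r ^ 2 + 4 * s ^ 2), r) := by
  have hcast : ((2 * n + 3 : ℕ) : ℤ) = 2 * (n : ℤ) + 3 := by push_cast; rfl
  have ht : (tquad 1 1 2 8 n : ℤ) = 2 * ((Quat.quads ((2 * n + 3 : ℕ) : ℤ)).card : ℤ) := by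
    rw [Quat.tquad_eq_card, Quat.card_triReps, hcast]
    push_cast
    rfl
  constructor
  · intro h
    have h' := Nat.even_iff.1 h
    rw [ht, Quat.card_quads_three (by omega)]
    ring
  · intro h
    have h' := Nat.odd_iff.1 h
    have h4 : ((2 * (n : ℤ) + 3) - 1) / 4 = ((n : ℤ) + 1) / 2 := by omega
    rw [ht, Quat.two_mul_card_quads_one (by omega), hcast, Quat.signed_count' (by omega),
      Quat.finsum_eq, h4, Quat.sgn_half_succ n h']
    ring
end
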